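/- arXiv:1909.07173 — 2 statements merged into one kernel-verified Lean document; each statement's English description precedes it below -/
import Mathlib

section
/- Equip Λ²ℤ⁴ with the symmetric bilinear form b(x,y) := x ∧ y ∈ Λ⁴ℤ⁴ ≅ ℤ. Let h ∈ Λ²ℤ⁴ be primitive with b(h,h) = 2d > 0, and let F_h be the nondegenerate alternating form on ℤ⁴ given by F_h(β₁,β₂) = h ∧ β₁ ∧ β₂ ∈ Λ⁴ℤ⁴ ≅ ℤ. Then the image under the second exterior power homomorphism λ(ψ) = Λ²ψ of the symplectic group Sp(ℤ⁴, F_h) = {ψ ∈ GL₄(ℤ) : F_h(ψβ₁,ψβ₂) = F_h(β₁,β₂) for all β₁,β₂} equals the stabilizer SO^+_h(Λ²ℤ⁴, b) = {φ ∈ SO^+(Λ²ℤ⁴, b) : φ(h) = h}. -/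
open Matrix

/-- The ℝ-bilinear extension of the integral bilinear form with Gram matrix `M`. -/
def bilinR {ι : Type*} [Fintype ι] (M : Matrix ι ι ℤ) (x y : ι → ℝ) : ℝ :=
  x ⬝ᵥ ((M.map (Int.cast : ℤ → ℝ)) *ᵥ y)

/-- `w` is a tuple of vectors of `L ⊗ ℝ` spanning a maximal positive definite subspace:
its Gram matrix is positive definite and no longer tuple has positive definite Gram matrix. -/
def IsMaxPosTuple {ι : Type*} [Fintype ι] (M : Matrix ι ι ℤ) {k : ℕ}
    (w : Fin k → ι → ℝ) : Prop :=
  (Matrix.of fun i j => bilinR M (w i) (w j)).PosDef ∧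
    ∀ w' : Fin (k + 1) → ι → ℝ,
      ¬ (Matrix.of fun i j => bilinR M (w' i) (w' j)).PosDef

/-- `g` preserves the orientation of the positive cone of the lattice with Gram matrix `M`:
for every basis `w` of a maximal positive definite subspace `W` of `L ⊗ ℝ`, the determinant of
the matrix `(B(wᵢ, g wⱼ))` (which equals, up to the positive factor `det (Gram w)`, the
determinant of the orthogonal projection of `g|_W` back to `W`) is positive. -/
def OrientPres {ι : Type*} [Fintype ι] (M : Matrix ι ι ℤ) (g : Matrix ι ι ℤ) : Prop :=
  ∀ (k : ℕ) (w : Fin k → ι → ℝ), IsMaxPosTuple M w →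
    0 < (Matrix.of fun i j : Fin k =>
          bilinR M (w i) ((g.map (Int.cast : ℤ → ℝ)) *ᵥ w j)).det

/-- `g` is an isometry of the lattice with Gram matrix `M`. -/
def IsIsometry {ι : Type*} [Fintype ι] (M : Matrix ι ι ℤ) (g : Matrix ι ι ℤ) : Prop :=
  gᵀ * M * g = M

/-- A vector of a lattice is primitive if it is divisible only by units. -/
def IsPrimitiveVec {ι : Type*} (l : ι → ℤ) : Prop :=
  ∀ (c : ℤ) (x : ι → ℤ), l = c • x → IsUnit c

/-- First members of the six index pairs `(0,1),(0,2),(0,3),(1,2),(1,3),(2,3)` indexing the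
standard basis `eᵢ ∧ eⱼ` (i < j) of `Λ²ℤ⁴`. -/
def pfst : Fin 6 → Fin 4 := ![0, 0, 0, 1, 1, 2]

/-- Second members of the six index pairs indexing the standard basis of `Λ²ℤ⁴`. -/
def psnd : Fin 6 → Fin 4 := ![1, 2, 3, 2, 3, 3]

/-- The second exterior power `Λ²ψ` of a `4×4` integral matrix, in the standard basis
`eᵢ ∧ eⱼ` (i < j) of `Λ²ℤ⁴`: its entries are the `2×2` minors of `ψ`. -/
def lam2 (ψ : Matrix (Fin 4) (Fin 4) ℤ) : Matrix (Fin 6) (Fin 6) ℤ :=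
  Matrix.of fun I J =>
    ψ (pfst I) (pfst J) * ψ (psnd I) (psnd J) - ψ (pfst I) (psnd J) * ψ (psnd I) (pfst J)

/-- The Gram matrix of the symmetric bilinear form `b(x,y) = x ∧ y ∈ Λ⁴ℤ⁴ ≅ ℤ` on `Λ²ℤ⁴`,
in the standard basis `eᵢ ∧ eⱼ` (i < j), where `Λ⁴ℤ⁴` is identified with `ℤ` via the
generator `e₀ ∧ e₁ ∧ e₂ ∧ e₃`. -/
def G6 : Matrix (Fin 6) (Fin 6) ℤ :=
  !![0,0,0,0,0,1;
     0,0,0,0,-1,0;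
     0,0,0,1,0,0;
     0,0,1,0,0,0;
     0,-1,0,0,0,0;
     1,0,0,0,0,0]

/-- The wedge product `β ∧ γ ∈ Λ²ℤ⁴` of two vectors of `ℤ⁴`, in the standard basis
`eᵢ ∧ eⱼ` (i < j) of `Λ²ℤ⁴`. -/
def wedge (β γ : Fin 4 → ℤ) : Fin 6 → ℤ :=
  ![β 0 * γ 1 - β 1 * γ 0,
    β 0 * γ 2 - β 2 * γ 0,
    β 0 * γ 3 - β 3 * γ 0,
    β 1 * γ 2 - β 2 * γ 1,
    β 1 * γ 3 - β 3 * γ 1,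
    β 2 * γ 3 - β 3 * γ 2]

/-- The alternating form `F_h(β₁,β₂) = h ∧ β₁ ∧ β₂ ∈ Λ⁴ℤ⁴ ≅ ℤ` on `ℤ⁴`
associated with `h ∈ Λ²ℤ⁴`. -/
def Fh (h : Fin 6 → ℤ) (β γ : Fin 4 → ℤ) : ℤ := h ⬝ᵥ (G6 *ᵥ wedge β γ)

/-!
Since `SL₄(ℝ)` is path connected and the sign of the determinant of `Λ²A`, as well as of its
compression to a maximal positive definite subspace, cannot jump as `A` varies in it, the matrices
`Λ²ψ` with `ψ ∈ SL₄(ℤ)` all lie in `SO⁺(Λ²ℤ⁴)`.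

Conversely, let `g ∈ SO(Λ²ℤ⁴)`. Isotropic vectors of `Λ²ℤ⁴` are decomposable, so some `Λ²ψ` agrees
with `g` on the hyperbolic plane spanned by `e₀ ∧ e₁` and `e₂ ∧ e₃`. The orthogonal complement of
this plane is the lattice of `2 × 2` matrices with the form `-2 det`, on which a pair `(A, B)` of
elements of `SL₂(ℤ)` acts by `P ↦ A P Bᵀ`; hence `ψ` can be corrected so as to agree with `g` on a
second hyperbolic plane. On the remaining plane `g` is then `Λ²ψ` or `-Λ²ψ`, and the second case
reverses the orientation of the positive cone. Thus `SO⁺(Λ²ℤ⁴)` is the image of `SL₄(ℤ)`.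

Finally, `ψ` preserves `F_h` if and only if the transpose of `Λ²ψ` fixes the functional `b(h, ·)`.
As the Pfaffian of `F_h` does not vanish, this forces `det ψ = 1`; then `Λ²ψ` is an isometry, and
the condition says that it fixes `h`.
-/

open scoped MatrixGroups

section BezoutDomain

variable {R : Type*} [CommRing R] [IsDomain R] [IsBezout R]

theorem exists_eq_smul_unimodular {ι : Type*} [Fintype ι] [Nonempty ι] (u : ι → R) :
    ∃ (a : R) (b m : ι → R), u = a • b ∧ m ⬝ᵥ b = 1 := by
  classical
  rcases eq_or_ne u 0 with rfl | hu
  · let i : ι := Classical.arbitrary ι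
    exact ⟨0, Pi.single i 1, Pi.single i 1, by simp, by simp⟩
  obtain ⟨a, ha⟩ := IsBezout.isPrincipal_of_FG (Ideal.span (Set.range u))
    (Submodule.fg_span (Set.finite_range u))
  rw [Ideal.submodule_span_eq] at ha
  have a_dvd (i : ι) : a ∣ u i :=
    Ideal.mem_span_singleton.1 (ha ▸ Ideal.subset_span (Set.mem_range_self i))
  choose b hb using a_dvd
  obtain ⟨m, hm⟩ := (Ideal.mem_span_range_iff_exists_fun).1 (ha ▸ Ideal.mem_span_singleton_self a)
  have hub : u = a • b := funext hb
  have ha0 : a ≠ 0 := fun h0 => hu (by rw [hub, h0, zero_smul])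
  refine ⟨a, b, m, hub, mul_left_cancel₀ ha0 ?_⟩
  calc a * m ⬝ᵥ b = m ⬝ᵥ u := by rw [hub, dotProduct_smul, smul_eq_mul]
    _ = a * 1 := by rw [mul_one, ← hm, dotProduct]

theorem exists_eq_vecMulVec_of_det_eq_zero {M : Matrix (Fin 2) (Fin 2) R} (hM : M.det = 0) :
    ∃ u v : Fin 2 → R, M = vecMulVec u v := by
  rcases eq_or_ne (M 0) 0 with h0 | h0
  · refine ⟨![0, 1], M 1, ?_⟩
    ext i j
    fin_cases i <;> simp [vecMulVec_apply, h0]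
  obtain ⟨a, b, m, hab, hmb⟩ := exists_eq_smul_unimodular (M 0)
  have ha : a ≠ 0 := fun ha => h0 (by rw [hab, ha, zero_smul])
  have h00 : M 0 0 = a * b 0 := congrFun hab 0
  have h01 : M 0 1 = a * b 1 := congrFun hab 1
  rw [det_fin_two] at hM
  have hb : b 0 * M 1 1 = b 1 * M 1 0 :=
    mul_left_cancel₀ ha (by linear_combination hM - M 1 1 * h00 + M 1 0 * h01)
  rw [dotProduct, Fin.sum_univ_two] at hmb
  refine ⟨![a, m ⬝ᵥ M 1], b, ?_⟩
  ext i j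
  fin_cases i <;> fin_cases j <;>
    simp only [vecMulVec_apply, dotProduct, Fin.sum_univ_two, Fin.zero_eta, Fin.mk_one,
      cons_val_zero, cons_val_one, h00, h01]
  · linear_combination -M 1 0 * hmb - m 1 * hb
  · linear_combination -M 1 1 * hmb + m 0 * hb

theorem exists_specialLinearGroup_vecMulVec_col {P Q : Matrix (Fin 2) (Fin 2) R}
    (hP : P.det = 0) (hQ : Q.det = 0) (hPQ : (P + Q).det = 1) :
    ∃ A B : SL(2, R), P = vecMulVec ((A : Matrix (Fin 2) (Fin 2) R).col 0)
        ((B : Matrix (Fin 2) (Fin 2) R).col 0) ∧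
      Q = vecMulVec ((A : Matrix (Fin 2) (Fin 2) R).col 1)
        ((B : Matrix (Fin 2) (Fin 2) R).col 1) := by
  obtain ⟨u, v, rfl⟩ := exists_eq_vecMulVec_of_det_eq_zero hP
  obtain ⟨s, t, rfl⟩ := exists_eq_vecMulVec_of_det_eq_zero hQ
  set a := u 0 * s 1 - s 0 * u 1 with ha
  set b := v 0 * t 1 - t 0 * v 1 with hb
  have hab : a * b = 1 := by
    rw [← hPQ, det_fin_two]
    simp only [Matrix.add_apply, vecMulVec_apply, ha, hb]
    ring
  refine ⟨⟨!![u 0, b * s 0; u 1, b * s 1], ?_⟩, ⟨!![v 0, a * t 0; v 1, a * t 1], ?_⟩, ?_, ?_⟩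
  · rw [det_fin_two_of]
    linear_combination hab + b * ha.symm
  · rw [det_fin_two_of]
    linear_combination hab + a * hb.symm
  · ext i j
    fin_cases i <;> fin_cases j <;> simp [vecMulVec_apply]
  · ext i j
    fin_cases i <;> fin_cases j <;> simp [vecMulVec_apply] <;> linear_combination -(s _ * t _) * hab

theorem exists_unimodular_orthogonal (v : Fin 3 → R) :
    ∃ b m : Fin 3 → R, m ⬝ᵥ b = 1 ∧ b ⬝ᵥ v = 0 := by
  obtain ⟨a, c, m, hac, hmc⟩ := exists_eq_smul_unimodular ![v 0, v 1]
  have h0 : v 0 = a * c 0 := congrFun hac 0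
  have h1 : v 1 = a * c 1 := congrFun hac 1
  rw [dotProduct, Fin.sum_univ_two] at hmc
  refine ⟨![-c 1, c 0, 0], ![-m 1, m 0, 0], ?_, ?_⟩ <;>
    simp only [vec3_dotProduct, cons_val_zero, cons_val_one, cons_val]
  · linear_combination hmc
  · linear_combination -c 1 * h0 + c 0 * h1

theorem exists_eq_smul_unimodular_orthogonal {u v : Fin 3 → R} (huv : u ⬝ᵥ v = 0) :
    ∃ (a : R) (b m : Fin 3 → R), u = a • b ∧ m ⬝ᵥ b = 1 ∧ b ⬝ᵥ v = 0 := by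
  rcases eq_or_ne u 0 with rfl | hu
  · obtain ⟨b, m, hmb, hbv⟩ := exists_unimodular_orthogonal v
    exact ⟨0, b, m, (zero_smul R b).symm, hmb, hbv⟩
  obtain ⟨a, b, m, rfl, hmb⟩ := exists_eq_smul_unimodular u
  have ha : a ≠ 0 := fun ha => hu (by rw [ha, zero_smul])
  rw [smul_dotProduct, smul_eq_mul] at huv
  exact ⟨a, b, m, rfl, hmb, (mul_eq_zero.1 huv).resolve_left ha⟩

end BezoutDomain

theorem cross_cross_eq_self_of_unimodular {R : Type*} [CommRing R] {b m v : Fin 3 → R}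
    (hmb : m ⬝ᵥ b = 1) (hbv : b ⬝ᵥ v = 0) : (m ⨯₃ v) ⨯₃ b = v := by
  rw [cross_cross_eq_smul_sub_smul, hmb, dotProduct_comm, hbv, one_smul, zero_smul, sub_zero]

theorem joined_one_mul {G : Type*} [Monoid G] [TopologicalSpace G] [ContinuousMul G]
    {a b : G} (ha : Joined 1 a) (hb : Joined 1 b) : Joined 1 (a * b) := by
  simpa only [mul_one] using ha.mul hb

section SpecialLinearGroup

open Matrix.SpecialLinearGroup

variable {n F : Type*} [Fintype n] [DecidableEq n] [Field F]

/-- The element `n_{ij}(c)` of `SL` mapping `eⱼ` to `c eᵢ` and `eᵢ` to `-c⁻¹ eⱼ`, as a product of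
transvections. -/
def weylElement {i j : n} (hij : i ≠ j) (c : F) : SpecialLinearGroup n F :=
  SpecialLinearGroup.transvection hij c * SpecialLinearGroup.transvection hij.symm (-c⁻¹) *
    SpecialLinearGroup.transvection hij c

theorem diag2n_eq_weylElement_mul {i j : n} (hij : i ≠ j) {c : F} (hc : c ≠ 0) :
    diag2n hij c hc = weylElement hij c * weylElement hij (-1) := by
  apply Subtype.ext
  simp only [weylElement, diag2n_coe, coe_mul, transvection_coe, mul_add, add_mul,
    single_mul_single_same, mul_one, one_mul, ne_eq, hij, hij.symm, not_false_eq_true,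
    single_mul_single_of_ne, add_zero]
  ext a b
  simp only [Matrix.add_apply, single_apply, Matrix.one_apply, diagonal_apply]
  by_cases hai : a = i <;> by_cases hbi : b = i <;> by_cases haj : a = j <;>
    by_cases hbj : b = j <;> simp_all [eq_comm]

variable [TopologicalSpace F] [IsTopologicalRing F] [PathConnectedSpace F]

theorem joined_one_transvection {i j : n} (hij : i ≠ j) (a : F) :
    Joined 1 (SpecialLinearGroup.transvection hij a) := by
  have hcont : Continuous fun c : F => SpecialLinearGroup.transvection hij c := by
    refine Continuous.subtype_mk (continuous_const.add (continuous_matrix fun k l => ?_)) _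
    simp only [single_apply]
    split_ifs <;> fun_prop
  simpa only [transvection_coeff_zero] using (PathConnectedSpace.joined 0 a).map hcont

theorem joined_one_weylElement {i j : n} (hij : i ≠ j) (c : F) : Joined 1 (weylElement hij c) :=
  joined_one_mul (joined_one_mul (joined_one_transvection _ _) (joined_one_transvection _ _))
    (joined_one_transvection _ _)

theorem joined_one_specialLinearGroup [Nontrivial n] (A : SpecialLinearGroup n F) : Joined 1 A := by
  refine diagonal_transvection_induction' (Joined 1) A (fun i j hij c hc => ?_)
    (fun _ _ => joined_one_transvection) fun _ _ => joined_one_mul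
  rw [diag2n_eq_weylElement_mul]
  exact joined_one_mul (joined_one_weylElement _ _) (joined_one_weylElement _ _)

instance pathConnectedSpace_specialLinearGroup :
    PathConnectedSpace (SpecialLinearGroup n F) := by
  rcases subsingleton_or_nontrivial n with _ | _
  · infer_instance
  · exact ⟨⟨1⟩, fun A B =>
      (joined_one_specialLinearGroup A).symm.trans (joined_one_specialLinearGroup B)⟩

end SpecialLinearGroup

theorem pos_of_continuous_of_forall_ne_zero {X : Type*} [TopologicalSpace X] [PreconnectedSpace X]
    {f : X → ℝ} (hf : Continuous f) (hf0 : ∀ x, f x ≠ 0) {x₀ : X} (hx₀ : 0 < f x₀) (x : X) :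
    0 < f x := by
  by_contra hx
  obtain ⟨y, hy⟩ := mem_range_of_exists_le_of_exists_ge hf ⟨x, not_lt.1 hx⟩ ⟨x₀, hx₀.le⟩
  exact hf0 y hy

section SecondCompound

variable {R S : Type*} [CommRing R] [CommRing S]

/-- The second compound matrix of a `4 × 4` matrix over any commutative ring, with the index
conventions of `lam2`, which is the case `R = ℤ`. The case `R = ℝ` serves to deform `lam2 ψ`. -/
def secondCompound (A : Matrix (Fin 4) (Fin 4) R) : Matrix (Fin 6) (Fin 6) R :=
  Matrix.of fun I J =>
    A (pfst I) (pfst J) * A (psnd I) (psnd J) - A (pfst I) (psnd J) * A (psnd I) (pfst J)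

theorem lam2_eq_secondCompound (ψ : Matrix (Fin 4) (Fin 4) ℤ) : lam2 ψ = secondCompound ψ := rfl

theorem secondCompound_map (f : R →+* S) (A : Matrix (Fin 4) (Fin 4) R) :
    secondCompound (A.map f) = (secondCompound A).map f := by
  ext I J
  simp [secondCompound]

theorem secondCompound_transpose (A : Matrix (Fin 4) (Fin 4) R) :
    secondCompound Aᵀ = (secondCompound A)ᵀ := by
  ext I J
  simp only [secondCompound, of_apply, transpose_apply]
  ring

theorem secondCompound_one : secondCompound (1 : Matrix (Fin 4) (Fin 4) R) = 1 := by
  ext I J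
  fin_cases I <;> fin_cases J <;> simp [secondCompound, pfst, psnd, Matrix.one_apply]

theorem secondCompound_mul (A B : Matrix (Fin 4) (Fin 4) R) :
    secondCompound (A * B) = secondCompound A * secondCompound B := by
  ext I J
  simp only [secondCompound, Matrix.mul_apply, of_apply, Fin.sum_univ_four, Fin.sum_univ_six]
  generalize pfst I = i₁, psnd I = i₂, pfst J = j₁, psnd J = j₂
  simp only [pfst, psnd, cons_val]
  ring

theorem continuous_secondCompound [TopologicalSpace R] [IsTopologicalRing R] :
    Continuous (secondCompound (R := R)) := by
  refine continuous_matrix fun I J => ?_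
  simp only [secondCompound, of_apply]
  fun_prop

theorem G6_mul_self : G6 * G6 = 1 := by decide

theorem G6_transpose : G6ᵀ = G6 := by decide

theorem det_G6_ne_zero : G6.det ≠ 0 := (isUnit_det_of_left_inverse G6_mul_self).ne_zero

theorem dotProduct_G6_mulVec (x y : Fin 6 → R) :
    x ⬝ᵥ (G6.map (Int.cast : ℤ → R) *ᵥ y) =
      x 0 * y 5 - x 1 * y 4 + x 2 * y 3 + x 3 * y 2 - x 4 * y 1 + x 5 * y 0 := by
  simp [dotProduct, mulVec, Fin.sum_univ_six, G6]
  ring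

theorem transpose_mul_mul_apply {ι : Type*} [Fintype ι] (g M : Matrix ι ι R) (i j : ι) :
    (gᵀ * M * g) i j = g.col i ⬝ᵥ (M *ᵥ g.col j) := by
  rw [Matrix.mul_assoc, Matrix.mul_apply']
  rfl

-- Laplace expansion along the first two columns.
theorem secondCompound_transpose_mul_G6_mul_apply (A : Matrix (Fin 4) (Fin 4) R) (I J : Fin 6) :
    ((secondCompound A)ᵀ * G6.map (Int.cast : ℤ → R) * secondCompound A) I J =
      (A.submatrix id ![pfst I, psnd I, pfst J, psnd J]).det := by
  rw [transpose_mul_mul_apply, dotProduct_G6_mulVec, det_succ_row_zero]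
  simp only [col_apply, secondCompound, of_apply]
  generalize pfst I = i₁, psnd I = i₂, pfst J = j₁, psnd J = j₂
  simp [pfst, psnd, Fin.sum_univ_four, det_fin_three, Fin.succAbove]
  ring

theorem secondCompound_transpose_mul_G6_mul (A : Matrix (Fin 4) (Fin 4) R) :
    (secondCompound A)ᵀ * G6.map (Int.cast : ℤ → R) * secondCompound A =
      A.det • G6.map (Int.cast : ℤ → R) := by
  ext I J
  have hG6 : (G6.map (Int.cast : ℤ → R)) I J =
      ((1 : Matrix (Fin 4) (Fin 4) R).submatrix id ![pfst I, psnd I, pfst J, psnd J]).det := by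
    rw [← secondCompound_transpose_mul_G6_mul_apply, secondCompound_one, transpose_one,
      Matrix.one_mul, Matrix.mul_one]
  rw [secondCompound_transpose_mul_G6_mul_apply, Matrix.smul_apply, hG6, smul_eq_mul, ← det_mul]
  congr 1
  ext i j
  simp [Matrix.mul_apply, Matrix.one_apply]

theorem sq_det_eq_one_of_transpose_mul_mul [IsDomain R] {ι : Type*} [Fintype ι] [DecidableEq ι]
    {M g : Matrix ι ι R} (hM : M.det ≠ 0) (hg : gᵀ * M * g = M) : g.det ^ 2 = 1 := by
  have hdet : g.det * M.det * g.det = M.det := by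
    rw [← det_transpose g, ← det_mul, det_transpose, ← det_mul, hg]
  exact mul_right_cancel₀ hM (by linear_combination hdet)

end SecondCompound

section Orientation

variable {ι : Type*} [Fintype ι] {M : Matrix ι ι ℤ} {k : ℕ}

theorem bilinR_eq_toBilin' [DecidableEq ι] (M : Matrix ι ι ℤ) (x y : ι → ℝ) :
    bilinR M x y = Matrix.toBilin' (M.map (Int.cast : ℤ → ℝ)) x y :=
  (Matrix.toBilin'_apply' _ _ _).symm

theorem bilinR_comm (hM : Mᵀ = M) (x y : ι → ℝ) : bilinR M x y = bilinR M y x := by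
  rw [bilinR, dotProduct_mulVec, ← mulVec_transpose, ← transpose_map, hM, dotProduct_comm, bilinR]

theorem bilinR_mulVec_mulVec {g : Matrix ι ι ℝ}
    (hg : gᵀ * M.map (Int.cast : ℤ → ℝ) * g = M.map (Int.cast : ℤ → ℝ)) (x y : ι → ℝ) :
    bilinR M (g *ᵥ x) (g *ᵥ y) = bilinR M x y := by
  rw [bilinR, ← vecMul_transpose, ← dotProduct_mulVec, mulVec_mulVec, mulVec_mulVec, hg, bilinR]

theorem bilinR_sum_smul_right {κ : Type*} [Fintype κ] (M : Matrix ι ι ℤ) (x : ι → ℝ)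
    (w : κ → ι → ℝ) (c : κ → ℝ) :
    bilinR M x (∑ j, c j • w j) = ∑ j, bilinR M x (w j) * c j := by
  classical
  simp only [bilinR_eq_toBilin', map_sum, map_smul, smul_eq_mul, mul_comm]

/-- The Gram matrix of a family of vectors of `L ⊗ ℝ`, as it occurs in `IsMaxPosTuple`. -/
def bilinGram {κ : Type*} (M : Matrix ι ι ℤ) (w : κ → ι → ℝ) : Matrix κ κ ℝ :=
  Matrix.of fun i j => bilinR M (w i) (w j)

theorem dotProduct_bilinGram_mulVec {κ : Type*} [Fintype κ] (M : Matrix ι ι ℤ) (w : κ → ι → ℝ)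
    (c : κ → ℝ) :
    c ⬝ᵥ (bilinGram M w *ᵥ c) = bilinR M (∑ i, c i • w i) (∑ j, c j • w j) := by
  classical
  have hrow : bilinGram M w *ᵥ c = fun i => bilinR M (w i) (∑ j, c j • w j) :=
    funext fun i => (bilinR_sum_smul_right M (w i) w c).symm
  have hleft (y : ι → ℝ) : bilinR M (∑ i, c i • w i) y = c ⬝ᵥ fun i => bilinR M (w i) y := by
    simp only [bilinR_eq_toBilin', map_sum, map_smul, LinearMap.sum_apply, LinearMap.smul_apply,
      smul_eq_mul, dotProduct]
  rw [hrow, hleft]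

/-- For a basis `w` of a maximal positive definite subspace `W`, a positive multiple of the
determinant of the composite of `g|_W` with the orthogonal projection to `W`. -/
def projDet (M : Matrix ι ι ℤ) (w : Fin k → ι → ℝ) (g : Matrix ι ι ℝ) : ℝ :=
  (Matrix.of fun i j : Fin k => bilinR M (w i) (g *ᵥ w j)).det

theorem continuous_projDet (M : Matrix ι ι ℤ) (w : Fin k → ι → ℝ) :
    Continuous (projDet M w) := by
  refine Continuous.matrix_det (continuous_matrix fun i j => ?_)
  exact continuous_const.dotProduct
    (continuous_const.matrix_mulVec (continuous_id.matrix_mulVec continuous_const))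

theorem projDet_one_pos [DecidableEq ι] {w : Fin k → ι → ℝ} (hw : IsMaxPosTuple M w) :
    0 < projDet M w 1 := by
  simpa only [projDet, one_mulVec] using hw.1.det_pos

theorem projDet_mul_of_forall_mulVec_eq_smul {w : Fin k → ι → ℝ} {g' : Matrix ι ι ℝ}
    {c : Fin k → ℝ} (hg' : ∀ j, g' *ᵥ w j = c j • w j) (g : Matrix ι ι ℝ) :
    projDet M w (g * g') = (∏ j, c j) * projDet M w g := by
  rw [projDet, projDet, ← det_mul_row]
  congr 1
  ext i j
  simp only [of_apply, ← mulVec_mulVec, hg', mulVec_smul, bilinR, dotProduct_smul, smul_eq_mul]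

theorem bilinR_smul_add_self_of_orthogonal {u v : ι → ℝ} (hM : Mᵀ = M) (huv : bilinR M u v = 0)
    (a : ℝ) : bilinR M (a • v + u) (a • v + u) = a ^ 2 * bilinR M v v + bilinR M u u := by
  classical
  have hvu : bilinR M v u = 0 := by rw [bilinR_comm hM, huv]
  simp only [bilinR_eq_toBilin', map_add, map_smul, LinearMap.add_apply, LinearMap.smul_apply,
    smul_eq_mul] at huv hvu ⊢
  rw [huv, hvu]
  ring

theorem posDef_bilinGram_cons {w : Fin k → ι → ℝ} {v : ι → ℝ} (hM : Mᵀ = M)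
    (hw : (bilinGram M w).PosDef) (hwv : ∀ i, bilinR M (w i) v = 0) (hv : 0 < bilinR M v v) :
    (bilinGram M (Fin.cons v w : Fin (k + 1) → ι → ℝ)).PosDef := by
  refine PosDef.of_dotProduct_mulVec_pos ?_ fun x hx => ?_
  · ext i j
    exact bilinR_comm hM _ _
  set u := ∑ i : Fin k, x i.succ • w i
  have huv : bilinR M u v = 0 := by
    simp only [bilinR_comm hM u, u, bilinR_sum_smul_right, bilinR_comm hM v (w _), hwv, zero_mul,
      Finset.sum_const_zero]
  have hquad :
      x ⬝ᵥ (bilinGram M (Fin.cons v w) *ᵥ x) = x 0 ^ 2 * bilinR M v v + bilinR M u u := by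
    rw [dotProduct_bilinGram_mulVec, Fin.sum_univ_succ]
    exact bilinR_smul_add_self_of_orthogonal hM huv (x 0)
  have hu : bilinR M u u = Fin.tail x ⬝ᵥ (bilinGram M w *ᵥ Fin.tail x) :=
    (dotProduct_bilinGram_mulVec M w (Fin.tail x)).symm
  rw [star_trivial, hquad, hu]
  rcases eq_or_ne (Fin.tail x) 0 with htail | htail
  · have hx0 : x 0 ≠ 0 := fun h0 => hx (funext (Fin.cases h0 (congrFun htail)))
    rw [htail, zero_dotProduct, add_zero]
    positivity
  · exact add_pos_of_nonneg_of_pos (by positivity) (hw.dotProduct_mulVec_pos htail)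

theorem IsMaxPosTuple.bilinR_self_nonpos {w : Fin k → ι → ℝ} (hM : Mᵀ = M)
    (hw : IsMaxPosTuple M w) {v : ι → ℝ} (hwv : ∀ i, bilinR M (w i) v = 0) :
    bilinR M v v ≤ 0 :=
  not_lt.1 fun hv => hw.2 _ (posDef_bilinGram_cons hM hw.1 hwv hv)

theorem IsMaxPosTuple.projDet_ne_zero {w : Fin k → ι → ℝ} (hM : Mᵀ = M) (hw : IsMaxPosTuple M w)
    {g : Matrix ι ι ℝ} (hg : gᵀ * M.map (Int.cast : ℤ → ℝ) * g = M.map (Int.cast : ℤ → ℝ)) :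
    projDet M w g ≠ 0 := by
  intro h0
  obtain ⟨c, hc, hc0⟩ := exists_mulVec_eq_zero_iff.2 h0
  set v := ∑ j, c j • w j
  have hort (i : Fin k) : bilinR M (w i) (g *ᵥ v) = 0 := by
    simp only [v, mulVec_sum, mulVec_smul, bilinR_sum_smul_right]
    exact congrFun hc0 i
  have hpos : 0 < bilinR M (g *ᵥ v) (g *ᵥ v) := by
    rw [bilinR_mulVec_mulVec hg, ← dotProduct_bilinGram_mulVec]
    exact hw.1.dotProduct_mulVec_pos hc
  exact hpos.not_ge (hw.bilinR_self_nonpos hM hort)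

theorem not_posDef_bilinGram_of_nonpos_on_ker {κ V : Type*} [Fintype κ] [AddCommGroup V]
    [Module ℝ V] [FiniteDimensional ℝ V] (hV : Module.finrank ℝ V < Fintype.card κ)
    {f : (ι → ℝ) →ₗ[ℝ] V}
    (hf : ∀ v, f v = 0 → bilinR M v v ≤ 0) (w : κ → ι → ℝ) :
    ¬ (bilinGram M w).PosDef := by
  intro hpos
  have hker : LinearMap.ker (f ∘ₗ Fintype.linearCombination ℝ w) ≠ ⊥ :=
    LinearMap.ker_ne_bot_of_finrank_lt (by rwa [Module.finrank_fintype_fun_eq_card])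
  obtain ⟨c, hc, hc0⟩ := Submodule.exists_mem_ne_zero_of_ne_bot hker
  refine (hpos.dotProduct_mulVec_pos hc0).not_ge ?_
  rw [star_trivial, dotProduct_bilinGram_mulVec]
  exact hf _ hc

end Orientation

section Lattice

variable {ι : Type*} [Fintype ι] {M g g' : Matrix ι ι ℤ}

theorem IsIsometry.mul (hg : IsIsometry M g) (hg' : IsIsometry M g') :
    IsIsometry M (g * g') := by
  rw [IsIsometry] at *
  calc (g * g')ᵀ * M * (g * g') = g'ᵀ * (gᵀ * M * g) * g' := by
        simp only [transpose_mul, Matrix.mul_assoc]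
    _ = M := by rw [hg, hg']

theorem IsIsometry.col_dotProduct_mulVec_col (hg : IsIsometry M g) (i j : ι) :
    g.col i ⬝ᵥ (M *ᵥ g.col j) = M i j := by
  rw [← transpose_mul_mul_apply, hg]

theorem IsIsometry.mulVec_eq_self_iff [DecidableEq ι] (hg : IsIsometry M g) (hM : M.det ≠ 0)
    {x : ι → ℤ} : g *ᵥ x = x ↔ gᵀ *ᵥ (M *ᵥ x) = M *ᵥ x := by
  have hgM : (gᵀ * M).det ≠ 0 := fun h0 => hM (by rw [← hg, det_mul, h0, zero_mul])
  have hinj : g *ᵥ x = x ↔ (gᵀ * M) *ᵥ (g *ᵥ x) = (gᵀ * M) *ᵥ x := by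
    refine ⟨fun h => by rw [h], fun h => sub_eq_zero.1 (eq_zero_of_mulVec_eq_zero hgM ?_)⟩
    rw [mulVec_sub, h, sub_self]
  rw [hinj, mulVec_mulVec, hg, mulVec_mulVec, eq_comm]

end Lattice

section ExteriorSquare

theorem dotProduct_G6_mulVec_int (x y : Fin 6 → ℤ) :
    x ⬝ᵥ (G6 *ᵥ y) =
      x 0 * y 5 - x 1 * y 4 + x 2 * y 3 + x 3 * y 2 - x 4 * y 1 + x 5 * y 0 := by
  simpa using! dotProduct_G6_mulVec x y

theorem lam2_transpose_mul_G6_mul (ψ : Matrix (Fin 4) (Fin 4) ℤ) :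
    (lam2 ψ)ᵀ * G6 * lam2 ψ = ψ.det • G6 := by
  simpa using! secondCompound_transpose_mul_G6_mul ψ

theorem lam2_dotProduct_G6_mulVec (ψ : Matrix (Fin 4) (Fin 4) ℤ) (x y : Fin 6 → ℤ) :
    (lam2 ψ *ᵥ x) ⬝ᵥ (G6 *ᵥ (lam2 ψ *ᵥ y)) = ψ.det * (x ⬝ᵥ (G6 *ᵥ y)) := by
  rw [← vecMul_transpose, ← dotProduct_mulVec, mulVec_mulVec, mulVec_mulVec,
    lam2_transpose_mul_G6_mul, smul_mulVec, dotProduct_smul, smul_eq_mul]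

theorem det_eq_lam2_col_dotProduct (ψ : Matrix (Fin 4) (Fin 4) ℤ) :
    ψ.det = (lam2 ψ).col 0 ⬝ᵥ (G6 *ᵥ (lam2 ψ).col 5) := by
  rw [← transpose_mul_mul_apply, lam2_transpose_mul_G6_mul]
  simp [G6]

theorem isIsometry_lam2 (ψ : SL(4, ℤ)) : IsIsometry G6 (lam2 ψ) := by
  rw [IsIsometry, lam2_transpose_mul_G6_mul, ψ.det_coe, one_smul]

theorem lam2_mul (ψ φ : Matrix (Fin 4) (Fin 4) ℤ) : lam2 (ψ * φ) = lam2 ψ * lam2 φ :=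
  secondCompound_mul ψ φ

theorem lam2_coe_inv_mul_lam2 (ψ : SL(4, ℤ)) : lam2 ↑ψ⁻¹ * lam2 ψ = 1 := by
  rw [← lam2_mul, ← Matrix.SpecialLinearGroup.coe_mul, inv_mul_cancel,
    Matrix.SpecialLinearGroup.coe_one]
  exact secondCompound_one

theorem lam2_coe_mul_lam2_inv_mul (ψ : SL(4, ℤ)) (g : Matrix (Fin 6) (Fin 6) ℤ) :
    lam2 ψ * (lam2 ↑ψ⁻¹ * g) = g := by
  rw [← Matrix.mul_assoc, mul_eq_one_comm.1 (lam2_coe_inv_mul_lam2 ψ), Matrix.one_mul]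

theorem lam2_inv_mul_col {ψ : SL(4, ℤ)} {g : Matrix (Fin 6) (Fin 6) ℤ} {j : Fin 6}
    (hj : (lam2 ψ).col j = g.col j) : (lam2 ↑ψ⁻¹ * g).col j = Pi.single j 1 := by
  rw [← mulVec_single_one, ← mulVec_mulVec, mulVec_single_one, ← hj, ← mulVec_single_one,
    mulVec_mulVec, lam2_coe_inv_mul_lam2, one_mulVec]

theorem lam2_col (ψ : Matrix (Fin 4) (Fin 4) ℤ) (J : Fin 6) :
    (lam2 ψ).col J = wedge (ψ.col (pfst J)) (ψ.col (psnd J)) := by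
  ext I
  fin_cases I <;> simp [lam2, wedge, pfst, psnd] <;> ring

theorem wedge_mulVec (ψ : Matrix (Fin 4) (Fin 4) ℤ) (β γ : Fin 4 → ℤ) :
    wedge (ψ *ᵥ β) (ψ *ᵥ γ) = lam2 ψ *ᵥ wedge β γ := by
  ext I
  fin_cases I <;>
    simp [wedge, lam2, pfst, psnd, mulVec, dotProduct, Fin.sum_univ_four, Fin.sum_univ_six] <;>
    ring

theorem wedge_single (J : Fin 6) :
    wedge (Pi.single (pfst J) 1) (Pi.single (psnd J) 1) = Pi.single J 1 := by
  decide +revert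

theorem map_lam2 (ψ : SL(4, ℤ)) : (lam2 ψ).map (Int.cast : ℤ → ℝ) =
    secondCompound (Matrix.SpecialLinearGroup.map (Int.castRingHom ℝ) ψ : SL(4, ℝ)) :=
  (secondCompound_map (Int.castRingHom ℝ) (ψ : Matrix (Fin 4) (Fin 4) ℤ)).symm

theorem secondCompound_coe_transpose_mul_G6_mul (A : SL(4, ℝ)) :
    (secondCompound (A : Matrix (Fin 4) (Fin 4) ℝ))ᵀ * G6.map (Int.cast : ℤ → ℝ) *
      secondCompound (A : Matrix (Fin 4) (Fin 4) ℝ) = G6.map (Int.cast : ℤ → ℝ) := by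
  rw [secondCompound_transpose_mul_G6_mul, A.det_coe, one_smul]

theorem det_secondCompound_coe_ne_zero (A : SL(4, ℝ)) :
    (secondCompound (A : Matrix (Fin 4) (Fin 4) ℝ)).det ≠ 0 := by
  have hG6 : (G6.map (Int.cast : ℤ → ℝ)).det ≠ 0 := by
    rw [← Int.cast_det]
    exact Int.cast_ne_zero.2 det_G6_ne_zero
  intro h0
  have hsq := sq_det_eq_one_of_transpose_mul_mul hG6 (secondCompound_coe_transpose_mul_G6_mul A)
  simp [h0] at hsq

theorem continuous_secondCompound_coe :
    Continuous fun A : SL(4, ℝ) => secondCompound (A : Matrix (Fin 4) (Fin 4) ℝ) :=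
  continuous_secondCompound.comp continuous_subtype_val

theorem det_lam2 (ψ : SL(4, ℤ)) : (lam2 ψ).det = 1 := by
  have hpos := pos_of_continuous_of_forall_ne_zero continuous_secondCompound_coe.matrix_det
    det_secondCompound_coe_ne_zero (x₀ := 1)
    (by rw [Matrix.SpecialLinearGroup.coe_one, secondCompound_one, det_one]; exact one_pos)
    (Matrix.SpecialLinearGroup.map (Int.castRingHom ℝ) ψ)
  rw [← map_lam2, ← Int.cast_det, Int.cast_pos] at hpos
  have hsq := sq_det_eq_one_of_transpose_mul_mul det_G6_ne_zero (isIsometry_lam2 ψ)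
  nlinarith

theorem orientPres_lam2 (ψ : SL(4, ℤ)) : OrientPres G6 (lam2 ψ) := by
  intro k w hw
  have hpos := pos_of_continuous_of_forall_ne_zero
    ((continuous_projDet G6 w).comp continuous_secondCompound_coe)
    (fun A => hw.projDet_ne_zero G6_transpose (secondCompound_coe_transpose_mul_G6_mul A))
    (x₀ := 1)
    (by simpa only [Function.comp_apply, Matrix.SpecialLinearGroup.coe_one, secondCompound_one]
      using projDet_one_pos hw)
    (Matrix.SpecialLinearGroup.map (Int.castRingHom ℝ) ψ)
  rwa [Function.comp_apply, ← map_lam2] at hpos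

-- By the Plücker relation `u = (p₀₁, p₀₂, p₀₃)` and `v = (p₂₃, -p₁₃, p₁₂)` are orthogonal; with
-- `u = a • b`, `b` unimodular and `v = x × b`, one has `p = (a, x) ∧ (0, b)`.
theorem exists_eq_wedge_of_isotropic {p : Fin 6 → ℤ} (hp : p ⬝ᵥ (G6 *ᵥ p) = 0) :
    ∃ α β, p = wedge α β := by
  have huv : ![p 0, p 1, p 2] ⬝ᵥ ![p 5, -p 4, p 3] = 0 := by
    rw [dotProduct_G6_mulVec_int] at hp
    simp only [vec3_dotProduct, cons_val]
    linarith
  obtain ⟨a, b, m, hu, hmb, hbv⟩ := exists_eq_smul_unimodular_orthogonal huv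
  have hv := cross_cross_eq_self_of_unimodular hmb hbv
  set x := m ⨯₃ ![p 5, -p 4, p 3]
  refine ⟨vecCons a x, vecCons 0 b, ?_⟩
  rw [cross_apply] at hv
  have hu0 : p 0 = a * b 0 := congrFun hu 0
  have hu1 : p 1 = a * b 1 := congrFun hu 1
  have hu2 : p 2 = a * b 2 := congrFun hu 2
  have hv0 : x 1 * b 2 - x 2 * b 1 = p 5 := congrFun hv 0
  have hv1 : x 2 * b 0 - x 0 * b 2 = -p 4 := congrFun hv 1
  have hv2 : x 0 * b 1 - x 1 * b 0 = p 3 := congrFun hv 2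
  ext i
  fin_cases i <;> simp only [wedge, Fin.reduceFinMk, Fin.zero_eta, Fin.mk_one, cons_val]
  · linear_combination hu0
  · linear_combination hu1
  · linear_combination hu2
  · linear_combination -hv2
  · linear_combination hv1
  · linear_combination -hv0

theorem exists_lam2_col_zero_five {p q : Fin 6 → ℤ} (hp : p ⬝ᵥ (G6 *ᵥ p) = 0)
    (hq : q ⬝ᵥ (G6 *ᵥ q) = 0) (hpq : p ⬝ᵥ (G6 *ᵥ q) = 1) :
    ∃ ψ : SL(4, ℤ), (lam2 ψ).col 0 = p ∧ (lam2 ψ).col 5 = q := by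
  obtain ⟨α, β, rfl⟩ := exists_eq_wedge_of_isotropic hp
  obtain ⟨γ, δ, rfl⟩ := exists_eq_wedge_of_isotropic hq
  let ψ : Matrix (Fin 4) (Fin 4) ℤ := (Matrix.of ![α, β, γ, δ])ᵀ
  have hψ0 : (lam2 ψ).col 0 = wedge α β := lam2_col ψ 0
  have hψ5 : (lam2 ψ).col 5 = wedge γ δ := lam2_col ψ 5
  exact ⟨⟨ψ, by rw [det_eq_lam2_col_dotProduct, hψ0, hψ5, hpq]⟩, hψ0, hψ5⟩

/-- The vector `∑ P i j • (eᵢ ∧ e₂₊ⱼ)` of `Λ²ℤ⁴`. This identifies the `2 × 2` matrices, with the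
quadratic form `-2 det`, with the orthogonal complement of the hyperbolic plane spanned by
`e₀ ∧ e₁` and `e₂ ∧ e₃`. -/
def mixedWedge (P : Matrix (Fin 2) (Fin 2) ℤ) : Fin 6 → ℤ :=
  ![0, P 0 0, P 0 1, P 1 0, P 1 1, 0]

theorem exists_eq_mixedWedge {x : Fin 6 → ℤ} (h0 : x 0 = 0) (h5 : x 5 = 0) :
    ∃ P, x = mixedWedge P := by
  refine ⟨!![x 1, x 2; x 3, x 4], ?_⟩
  ext i
  fin_cases i <;> simp [mixedWedge, h0, h5]

theorem mixedWedge_dotProduct_G6_mulVec (P Q : Matrix (Fin 2) (Fin 2) ℤ) :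
    mixedWedge P ⬝ᵥ (G6 *ᵥ mixedWedge Q) = P.det + Q.det - (P + Q).det := by
  simp only [dotProduct_G6_mulVec_int, mixedWedge, cons_val, det_fin_two, Matrix.add_apply]
  ring

/-- The block diagonal `4 × 4` matrix with diagonal blocks `A` and `B`, indexed by `Fin 4` to fit
the conventions of `lam2`. -/
def blockDiagTwoTwo (A B : Matrix (Fin 2) (Fin 2) ℤ) : Matrix (Fin 4) (Fin 4) ℤ :=
  !![A 0 0, A 0 1, 0, 0;
     A 1 0, A 1 1, 0, 0;
     0, 0, B 0 0, B 0 1;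
     0, 0, B 1 0, B 1 1]

section BlockDiag

variable (A B : Matrix (Fin 2) (Fin 2) ℤ)

theorem lam2_blockDiagTwoTwo_col_zero :
    (lam2 (blockDiagTwoTwo A B)).col 0 = Pi.single 0 A.det := by
  ext i
  fin_cases i <;> simp [lam2, pfst, psnd, blockDiagTwoTwo, det_fin_two]

theorem lam2_blockDiagTwoTwo_col_five :
    (lam2 (blockDiagTwoTwo A B)).col 5 = Pi.single 5 B.det := by
  ext i
  fin_cases i <;> simp [lam2, pfst, psnd, blockDiagTwoTwo, det_fin_two]

theorem lam2_blockDiagTwoTwo_col_one :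
    (lam2 (blockDiagTwoTwo A B)).col 1 = mixedWedge (vecMulVec (A.col 0) (B.col 0)) := by
  ext i
  fin_cases i <;> simp [lam2, pfst, psnd, blockDiagTwoTwo, mixedWedge, vecMulVec_apply]

theorem lam2_blockDiagTwoTwo_col_four :
    (lam2 (blockDiagTwoTwo A B)).col 4 = mixedWedge (vecMulVec (A.col 1) (B.col 1)) := by
  ext i
  fin_cases i <;> simp [lam2, pfst, psnd, blockDiagTwoTwo, mixedWedge, vecMulVec_apply]

end BlockDiag

theorem exists_lam2_col_one_four {p q : Fin 6 → ℤ} (hp0 : p 0 = 0) (hp5 : p 5 = 0) (hq0 : q 0 = 0)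
    (hq5 : q 5 = 0) (hp : p ⬝ᵥ (G6 *ᵥ p) = 0) (hq : q ⬝ᵥ (G6 *ᵥ q) = 0)
    (hpq : p ⬝ᵥ (G6 *ᵥ q) = -1) :
    ∃ ψ : SL(4, ℤ), (lam2 ψ).col 0 = Pi.single 0 1 ∧ (lam2 ψ).col 5 = Pi.single 5 1 ∧
      (lam2 ψ).col 1 = p ∧ (lam2 ψ).col 4 = q := by
  obtain ⟨P, rfl⟩ := exists_eq_mixedWedge hp0 hp5
  obtain ⟨Q, rfl⟩ := exists_eq_mixedWedge hq0 hq5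
  have hdet_self (P : Matrix (Fin 2) (Fin 2) ℤ)
      (hP : mixedWedge P ⬝ᵥ (G6 *ᵥ mixedWedge P) = 0) : P.det = 0 := by
    rw [mixedWedge_dotProduct_G6_mulVec, ← two_smul ℤ P, det_smul, Fintype.card_fin] at hP
    linarith
  have hdet_add : (P + Q).det = 1 := by
    rw [mixedWedge_dotProduct_G6_mulVec, hdet_self P hp, hdet_self Q hq] at hpq
    linarith
  obtain ⟨A, B, rfl, rfl⟩ :=
    exists_specialLinearGroup_vecMulVec_col (hdet_self P hp) (hdet_self Q hq) hdet_add
  have hψ0 := lam2_blockDiagTwoTwo_col_zero A B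
  have hψ5 := lam2_blockDiagTwoTwo_col_five A B
  rw [A.det_coe] at hψ0
  rw [B.det_coe] at hψ5
  have hψdet : (blockDiagTwoTwo A B).det = 1 := by
    rw [det_eq_lam2_col_dotProduct, hψ0, hψ5]
    decide
  exact ⟨⟨_, hψdet⟩, hψ0, hψ5, lam2_blockDiagTwoTwo_col_one A B,
    lam2_blockDiagTwoTwo_col_four A B⟩

theorem G6_mulVec_apply (x : Fin 6 → ℤ) (j : Fin 6) : (G6 *ᵥ x) j = G6 j j.rev * x j.rev := by
  fin_cases j <;> simp [mulVec, dotProduct, Fin.sum_univ_six, G6, Fin.rev]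

theorem G6_apply_rev_ne_zero (j : Fin 6) : G6 j j.rev ≠ 0 := by decide +revert

theorem G6_apply (j k : Fin 6) :
    G6 j k = G6 j j.rev * (1 : Matrix (Fin 6) (Fin 6) ℤ) j.rev k := by
  fin_cases j <;> fin_cases k <;> rfl

theorem IsIsometry.apply_rev_of_col_eq_single {g : Matrix (Fin 6) (Fin 6) ℤ}
    (hg : IsIsometry G6 g) {j : Fin 6} (hj : g.col j = Pi.single j 1) (k : Fin 6) :
    g j.rev k = (1 : Matrix (Fin 6) (Fin 6) ℤ) j.rev k := by
  have hjk := hg.col_dotProduct_mulVec_col j k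
  rw [hj, single_one_dotProduct, G6_mulVec_apply, G6_apply j k] at hjk
  exact mul_left_cancel₀ (G6_apply_rev_ne_zero j) hjk

/-- The endomorphism of `Λ²ℤ⁴` that acts by `B` on the hyperbolic plane spanned by `e₀ ∧ e₃` and
`e₁ ∧ e₂`, and as the identity on the orthogonal complement of that plane. -/
def middleBlock (B : Matrix (Fin 2) (Fin 2) ℤ) : Matrix (Fin 6) (Fin 6) ℤ :=
  !![1, 0, 0, 0, 0, 0;
     0, 1, 0, 0, 0, 0;
     0, 0, B 0 0, B 0 1, 0, 0;
     0, 0, B 1 0, B 1 1, 0, 0;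
     0, 0, 0, 0, 1, 0;
     0, 0, 0, 0, 0, 1]

theorem middleBlock_one : middleBlock 1 = 1 := by decide

theorem det_middleBlock (B : Matrix (Fin 2) (Fin 2) ℤ) : (middleBlock B).det = B.det := by
  simp [middleBlock, det_succ_row_zero, Fin.sum_univ_succ, Fin.succAbove]

theorem IsIsometry.exists_eq_middleBlock {g : Matrix (Fin 6) (Fin 6) ℤ}
    (hg : IsIsometry G6 g) (h0 : g.col 0 = Pi.single 0 1) (h1 : g.col 1 = Pi.single 1 1)
    (h4 : g.col 4 = Pi.single 4 1) (h5 : g.col 5 = Pi.single 5 1) :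
    ∃ B, g = middleBlock B := by
  have hcol {j : Fin 6} (hj : g.col j = Pi.single j 1) (i : Fin 6) :
      g i j = (Pi.single j 1 : Fin 6 → ℤ) i := congrFun hj i
  have hrow0 : ∀ k, g 0 k = (1 : Matrix (Fin 6) (Fin 6) ℤ) 0 k := hg.apply_rev_of_col_eq_single h5
  have hrow1 : ∀ k, g 1 k = (1 : Matrix (Fin 6) (Fin 6) ℤ) 1 k := hg.apply_rev_of_col_eq_single h4
  have hrow4 : ∀ k, g 4 k = (1 : Matrix (Fin 6) (Fin 6) ℤ) 4 k := hg.apply_rev_of_col_eq_single h1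
  have hrow5 : ∀ k, g 5 k = (1 : Matrix (Fin 6) (Fin 6) ℤ) 5 k := hg.apply_rev_of_col_eq_single h0
  refine ⟨!![g 2 2, g 2 3; g 3 2, g 3 3], ?_⟩
  ext i j
  fin_cases i <;> fin_cases j <;>
    simp [middleBlock, hcol h0, hcol h1, hcol h4, hcol h5, hrow0, hrow1, hrow4, hrow5]

theorem eq_one_or_eq_neg_one_of_isIsometry_middleBlock {B : Matrix (Fin 2) (Fin 2) ℤ}
    (hB : IsIsometry G6 (middleBlock B)) (hdet : B.det = 1) : B = 1 ∨ B = -1 := by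
  have h22 := hB.col_dotProduct_mulVec_col 2 2
  have h23 := hB.col_dotProduct_mulVec_col 2 3
  have h33 := hB.col_dotProduct_mulVec_col 3 3
  rw [dotProduct_G6_mulVec_int] at h22 h23 h33
  simp only [middleBlock, G6, col_apply, of_apply, cons_val, mul_zero, sub_zero, zero_add,
    add_zero] at h22 h23 h33
  rw [det_fin_two] at hdet
  have hunit : B 0 0 * B 1 1 = 1 := by linarith
  have h10 : B 1 0 = 0 := by
    have h00_10 : B 0 0 * B 1 0 = 0 := by linarith
    linear_combination -B 1 0 * hunit + B 1 1 * h00_10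
  have h01 : B 0 1 = 0 := by
    have h01_11 : B 0 1 * B 1 1 = 0 := by linarith
    linear_combination -B 0 1 * hunit + B 0 0 * h01_11
  rcases Int.mul_eq_one_iff_eq_one_or_neg_one.1 hunit with ⟨h00, h11⟩ | ⟨h00, h11⟩
  · left
    ext i j
    fin_cases i <;> fin_cases j <;> simp [h00, h01, h10, h11]
  · right
    ext i j
    fin_cases i <;> fin_cases j <;> simp [h00, h01, h10, h11]

theorem IsIsometry.exists_eq_lam2_or_eq_lam2_mul_middleBlock {g : Matrix (Fin 6) (Fin 6) ℤ}
    (hg : IsIsometry G6 g) (hdet : g.det = 1) :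
    ∃ ψ : SL(4, ℤ), g = lam2 ψ ∨ g = lam2 ψ * middleBlock (-1) := by
  obtain ⟨ψ, hψ0, hψ5⟩ := exists_lam2_col_zero_five (hg.col_dotProduct_mulVec_col 0 0)
    (hg.col_dotProduct_mulVec_col 5 5) (hg.col_dotProduct_mulVec_col 0 5)
  have hg₁ : IsIsometry G6 (lam2 ↑ψ⁻¹ * g) := (isIsometry_lam2 ψ⁻¹).mul hg
  have hg₁0 := lam2_inv_mul_col hψ0
  have hg₁5 := lam2_inv_mul_col hψ5
  set g₁ := lam2 ↑ψ⁻¹ * g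
  obtain ⟨φ, hφ0, hφ5, hφ1, hφ4⟩ := exists_lam2_col_one_four
    (hg₁.apply_rev_of_col_eq_single hg₁5 1) (hg₁.apply_rev_of_col_eq_single hg₁0 1)
    (hg₁.apply_rev_of_col_eq_single hg₁5 4) (hg₁.apply_rev_of_col_eq_single hg₁0 4)
    (hg₁.col_dotProduct_mulVec_col 1 1) (hg₁.col_dotProduct_mulVec_col 4 4)
    (hg₁.col_dotProduct_mulVec_col 1 4)
  have hg₂ : IsIsometry G6 (lam2 ↑φ⁻¹ * g₁) := (isIsometry_lam2 φ⁻¹).mul hg₁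
  have hfact : g = lam2 ↑(ψ * φ) * (lam2 ↑φ⁻¹ * g₁) := by
    rw [Matrix.SpecialLinearGroup.coe_mul, lam2_mul, Matrix.mul_assoc, lam2_coe_mul_lam2_inv_mul,
      lam2_coe_mul_lam2_inv_mul]
  obtain ⟨B, hB⟩ := hg₂.exists_eq_middleBlock (lam2_inv_mul_col (hφ0.trans hg₁0.symm))
    (lam2_inv_mul_col hφ1) (lam2_inv_mul_col hφ4) (lam2_inv_mul_col (hφ5.trans hg₁5.symm))
  have hBdet : B.det = 1 := by
    rw [← det_middleBlock, ← hB]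
    simp only [g₁, det_mul, det_lam2, hdet, mul_one]
  rw [hB] at hg₂ hfact
  refine ⟨ψ * φ, ?_⟩
  rcases eq_one_or_eq_neg_one_of_isIsometry_middleBlock hg₂ hBdet with rfl | rfl
  · exact .inl (by rw [hfact, middleBlock_one, Matrix.mul_one])
  · exact .inr hfact

end ExteriorSquare

section PositiveFrame

/-- The orthogonal frame `e₀ ∧ e₁ + e₂ ∧ e₃`, `e₀ ∧ e₂ - e₁ ∧ e₃`, `e₀ ∧ e₃ + e₁ ∧ e₂` of a maximal
positive definite subspace of `Λ²ℝ⁴`, on which the orientation character is evaluated. -/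
def selfDualFrame : Fin 3 → Fin 6 → ℝ :=
  ![![1, 0, 0, 0, 0, 1], ![0, 1, 0, 0, -1, 0], ![0, 0, 1, 1, 0, 0]]

theorem bilinR_G6 (x y : Fin 6 → ℝ) :
    bilinR G6 x y = x 0 * y 5 - x 1 * y 4 + x 2 * y 3 + x 3 * y 2 - x 4 * y 1 + x 5 * y 0 :=
  dotProduct_G6_mulVec x y

theorem bilinGram_selfDualFrame : bilinGram G6 selfDualFrame = diagonal fun _ => 2 := by
  ext i j
  rw [bilinGram, of_apply, bilinR_G6]
  fin_cases i <;> fin_cases j <;> simp [selfDualFrame, cons_val, one_add_one_eq_two]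

theorem isMaxPosTuple_selfDualFrame : IsMaxPosTuple G6 selfDualFrame := by
  let f : (Fin 6 → ℝ) →ₗ[ℝ] Fin 3 → ℝ := LinearMap.pi
    ![.proj 0 + .proj 5, .proj 1 - .proj 4, .proj 2 + .proj 3]
  have hf (v : Fin 6 → ℝ) (hv : f v = 0) : bilinR G6 v v ≤ 0 := by
    have h05 : v 0 + v 5 = 0 := congrFun hv 0
    have h14 : v 1 - v 4 = 0 := congrFun hv 1
    have h23 : v 2 + v 3 = 0 := congrFun hv 2
    have hsq : bilinR G6 v v = -2 * (v 5 ^ 2 + v 4 ^ 2 + v 3 ^ 2) := by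
      rw [bilinR_G6, eq_neg_of_add_eq_zero_left h05, sub_eq_zero.1 h14,
        eq_neg_of_add_eq_zero_left h23]
      ring
    rw [hsq]
    nlinarith [sq_nonneg (v 5), sq_nonneg (v 4), sq_nonneg (v 3)]
  have hpos : (bilinGram G6 selfDualFrame).PosDef :=
    bilinGram_selfDualFrame ▸ PosDef.diagonal fun _ => two_pos
  exact ⟨hpos, not_posDef_bilinGram_of_nonpos_on_ker (by simp) hf⟩

theorem middleBlock_neg_one_mulVec_selfDualFrame (j : Fin 3) :
    (middleBlock (-1)).map (Int.cast : ℤ → ℝ) *ᵥ selfDualFrame j =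
      (![1, 1, -1] : Fin 3 → ℝ) j • selfDualFrame j := by
  ext i
  fin_cases j <;> fin_cases i <;>
    simp [middleBlock, selfDualFrame, mulVec, dotProduct, Fin.sum_univ_six]

theorem not_orientPres_lam2_mul_middleBlock_neg_one (ψ : SL(4, ℤ)) :
    ¬ OrientPres G6 (lam2 ψ * middleBlock (-1)) := by
  intro hor
  have hframe := isMaxPosTuple_selfDualFrame
  have hpos : 0 < projDet G6 selfDualFrame ((lam2 ψ).map Int.cast) :=
    orientPres_lam2 ψ 3 selfDualFrame hframe
  have hpos' : 0 < projDet G6 selfDualFrame ((lam2 ψ * middleBlock (-1)).map Int.cast) :=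
    hor 3 selfDualFrame hframe
  have hneg : projDet G6 selfDualFrame ((lam2 ψ * middleBlock (-1)).map Int.cast) =
      -projDet G6 selfDualFrame ((lam2 ψ).map Int.cast) := by
    have hmap : (lam2 ψ * middleBlock (-1)).map (Int.cast : ℤ → ℝ) =
        (lam2 ψ).map Int.cast * (middleBlock (-1)).map Int.cast :=
      Matrix.map_mul (f := Int.castRingHom ℝ)
    rw [hmap, projDet_mul_of_forall_mulVec_eq_smul middleBlock_neg_one_mulVec_selfDualFrame]
    simp [Fin.prod_univ_three]
  linarith

theorem isIsometry_and_det_eq_one_and_orientPres_iff {g : Matrix (Fin 6) (Fin 6) ℤ} :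
    (IsIsometry G6 g ∧ g.det = 1 ∧ OrientPres G6 g) ↔ ∃ ψ : SL(4, ℤ), g = lam2 ψ := by
  constructor
  · rintro ⟨hiso, hdet, hor⟩
    obtain ⟨ψ, hg | rfl⟩ := hiso.exists_eq_lam2_or_eq_lam2_mul_middleBlock hdet
    · exact ⟨ψ, hg⟩
    · exact absurd hor (not_orientPres_lam2_mul_middleBlock_neg_one ψ)
  · rintro ⟨ψ, rfl⟩
    exact ⟨isIsometry_lam2 ψ, det_lam2 ψ, orientPres_lam2 ψ⟩

end PositiveFrame

section Symplectic

variable {h : Fin 6 → ℤ} {ψ : Matrix (Fin 4) (Fin 4) ℤ}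

theorem Fh_eq_dotProduct_wedge (h : Fin 6 → ℤ) (β γ : Fin 4 → ℤ) :
    Fh h β γ = (G6 *ᵥ h) ⬝ᵥ wedge β γ := by
  rw [Fh, dotProduct_mulVec, ← mulVec_transpose, G6_transpose]

theorem Fh_mulVec_mulVec (h : Fin 6 → ℤ) (ψ : Matrix (Fin 4) (Fin 4) ℤ) (β γ : Fin 4 → ℤ) :
    Fh h (ψ *ᵥ β) (ψ *ᵥ γ) = ((lam2 ψ)ᵀ *ᵥ (G6 *ᵥ h)) ⬝ᵥ wedge β γ := by
  rw [Fh_eq_dotProduct_wedge, wedge_mulVec, dotProduct_mulVec, mulVec_transpose]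

theorem ext_dotProduct_wedge {u v : Fin 6 → ℤ} (huv : ∀ β γ, u ⬝ᵥ wedge β γ = v ⬝ᵥ wedge β γ) :
    u = v := by
  ext J
  simpa only [wedge_single, dotProduct_single_one] using
    huv (Pi.single (pfst J) 1) (Pi.single (psnd J) 1)

theorem forall_Fh_mulVec_mulVec_iff :
    (∀ β γ, Fh h (ψ *ᵥ β) (ψ *ᵥ γ) = Fh h β γ) ↔
      (lam2 ψ)ᵀ *ᵥ (G6 *ᵥ h) = G6 *ᵥ h := by
  simp only [Fh_mulVec_mulVec]
  simp only [Fh_eq_dotProduct_wedge]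
  exact ⟨ext_dotProduct_wedge, fun hfix β γ => by rw [hfix]⟩

-- `b(h, h)` is twice the Pfaffian of `F_h`, and pulling `F_h` back along `ψ` multiplies it by
-- `det ψ`.
theorem det_eq_one_of_forall_Fh_mulVec_mulVec (hh : h ⬝ᵥ (G6 *ᵥ h) ≠ 0)
    (hψ : ∀ β γ, Fh h (ψ *ᵥ β) (ψ *ᵥ γ) = Fh h β γ) : ψ.det = 1 := by
  have hfix : lam2 ψᵀ *ᵥ (G6 *ᵥ h) = G6 *ᵥ h := by
    rw [lam2_eq_secondCompound, secondCompound_transpose, ← lam2_eq_secondCompound]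
    exact forall_Fh_mulVec_mulVec_iff.1 hψ
  have hdual : (G6 *ᵥ h) ⬝ᵥ (G6 *ᵥ (G6 *ᵥ h)) = h ⬝ᵥ (G6 *ᵥ h) := by
    rw [mulVec_mulVec, G6_mul_self, one_mulVec, dotProduct_comm]
  have hpf := lam2_dotProduct_G6_mulVec ψᵀ (G6 *ᵥ h) (G6 *ᵥ h)
  rw [hfix, hdual, det_transpose] at hpf
  exact mul_right_cancel₀ hh (by rw [← hpf, one_mul])

theorem forall_Fh_mulVec_mulVec_iff_lam2_mulVec_eq_self (ψ : SL(4, ℤ)) :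
    (∀ β γ, Fh h (ψ.1 *ᵥ β) (ψ.1 *ᵥ γ) = Fh h β γ) ↔ lam2 ψ *ᵥ h = h :=
  forall_Fh_mulVec_mulVec_iff.trans
    ((isIsometry_lam2 ψ).mulVec_eq_self_iff det_G6_ne_zero).symm

theorem exists_isUnit_det_and_forall_Fh_mulVec_mulVec_iff (hh : h ⬝ᵥ (G6 *ᵥ h) ≠ 0)
    {g : Matrix (Fin 6) (Fin 6) ℤ} :
    (∃ ψ : Matrix (Fin 4) (Fin 4) ℤ, IsUnit ψ.det ∧
        (∀ β γ, Fh h (ψ *ᵥ β) (ψ *ᵥ γ) = Fh h β γ) ∧ g = lam2 ψ) ↔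
      (∃ ψ : SL(4, ℤ), g = lam2 ψ) ∧ g *ᵥ h = h := by
  constructor
  · rintro ⟨ψ, -, hψ, rfl⟩
    let φ : SL(4, ℤ) := ⟨ψ, det_eq_one_of_forall_Fh_mulVec_mulVec hh hψ⟩
    exact ⟨⟨φ, rfl⟩, (forall_Fh_mulVec_mulVec_iff_lam2_mulVec_eq_self φ).1 hψ⟩
  · rintro ⟨⟨ψ, rfl⟩, hfix⟩
    exact ⟨ψ, by simp, (forall_Fh_mulVec_mulVec_iff_lam2_mulVec_eq_self ψ).2 hfix, rfl⟩

end Symplectic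

theorem stmt_13_general (h : Fin 6 → ℤ) (hh : h ⬝ᵥ (G6 *ᵥ h) ≠ 0) :
    {g : Matrix (Fin 6) (Fin 6) ℤ |
        ∃ ψ : Matrix (Fin 4) (Fin 4) ℤ, IsUnit ψ.det ∧
          (∀ β γ : Fin 4 → ℤ, Fh h (ψ *ᵥ β) (ψ *ᵥ γ) = Fh h β γ) ∧ g = lam2 ψ} =
    {g : Matrix (Fin 6) (Fin 6) ℤ |
        IsIsometry G6 g ∧ g.det = 1 ∧ OrientPres G6 g ∧ g *ᵥ h = h} := by
  ext g
  calc
    _ ↔ (∃ ψ : SL(4, ℤ), g = lam2 ψ) ∧ g *ᵥ h = h :=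
      exists_isUnit_det_and_forall_Fh_mulVec_mulVec_iff hh
    _ ↔ (IsIsometry G6 g ∧ g.det = 1 ∧ OrientPres G6 g) ∧ g *ᵥ h = h := by
      rw [isIsometry_and_det_eq_one_and_orientPres_iff]
    _ ↔ _ := by simp only [and_assoc, Set.mem_ofPred_eq]

/-- Let `h ∈ Λ²ℤ⁴` be primitive with `b(h,h) = 2d > 0`. The image under the second exterior
power homomorphism `λ(ψ) = Λ²ψ` of the symplectic group
`Sp(ℤ⁴, F_h) = {ψ ∈ GL₄(ℤ) | F_h(ψβ₁, ψβ₂) = F_h(β₁, β₂)}` equals the stabilizer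
`SO⁺_h(Λ²ℤ⁴, b) = {φ ∈ SO⁺(Λ²ℤ⁴, b) | φ(h) = h}`. -/
theorem stmt_13 (h : Fin 6 → ℤ) (hprim : IsPrimitiveVec h) (d : ℤ) (hdpos : 0 < d)
    (hsq : h ⬝ᵥ (G6 *ᵥ h) = 2 * d) :
    {g : Matrix (Fin 6) (Fin 6) ℤ |
        ∃ ψ : Matrix (Fin 4) (Fin 4) ℤ, IsUnit ψ.det ∧
          (∀ β γ : Fin 4 → ℤ, Fh h (ψ *ᵥ β) (ψ *ᵥ γ) = Fh h β γ) ∧ g = lam2 ψ} =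
    {g : Matrix (Fin 6) (Fin 6) ℤ |
        IsIsometry G6 g ∧ g.det = 1 ∧ OrientPres G6 g ∧ g *ᵥ h = h} := by
  exact stmt_13_general h (by omega)
end

section
/- Let M = U³ ⊕ ℤζ ⊕ ℤε with (ζ,ζ) = (ε,ε) = −2, (ζ,ε) = 0 and ζ, ε orthogonal to U³. Since (x, ζ+ε) ∈ 2ℤ for every x ∈ M, the reflection R(x) := x + ½ (x, ζ+ε)(ζ+ε) in the (−4)-vector ζ+ε is a well-defined integral isometry of M belonging to O^+(M). Then O^+(M) is generated by R together with the subgroup {g ∈ O^+(M) : g(ε) = ε}; equivalently, O^+(U³ ⊕ ℤζ ⊕ ℤε) is generated by R and the extensions by the identity on ℤε of the elements of O^+(U³ ⊕ ℤζ). -/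
open Matrix

/-- The Gram matrix of the lattice `L = U³ ⊕ ⟨-2⟩ ⊕ ⟨-2⟩`, in the basis
`e₁, f₁, e₂, f₂, e₃, f₃, t, s`. -/
def G8 : Matrix (Fin 8) (Fin 8) ℤ :=
  !![0,1,0,0,0,0,0,0;
     1,0,0,0,0,0,0,0;
     0,0,0,1,0,0,0,0;
     0,0,1,0,0,0,0,0;
     0,0,0,0,0,1,0,0;
     0,0,0,0,1,0,0,0;
     0,0,0,0,0,0,-2,0;
     0,0,0,0,0,0,0,-2]

/-- The class `ζ + ε`, of square `-4`. -/
def zpe : Fin 8 → ℤ := ![0,0,0,0,0,0,1,1]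

/-- The generator `ε` of the last `⟨-2⟩` summand. -/
def epsv : Fin 8 → ℤ := ![0,0,0,0,0,0,0,1]

/-- The reflection `R(x) = x + ½ (x, ζ+ε)(ζ+ε)` in the `(-4)`-vector `ζ + ε`,
as an integral matrix: it is the identity on `U³`, sends `ζ ↦ -ε` and `ε ↦ -ζ`. -/
def RM : Matrix (Fin 8) (Fin 8) ℤ :=
  !![1,0,0,0,0,0,0,0;
     0,1,0,0,0,0,0,0;
     0,0,1,0,0,0,0,0;
     0,0,0,1,0,0,0,0;
     0,0,0,0,1,0,0,0;
     0,0,0,0,0,1,0,0;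
     0,0,0,0,0,0,0,-1;
     0,0,0,0,0,0,-1,0]

/-!
The sign of `det (B(vᵢ, wⱼ))` is multiplicative on bases of maximal positive definite subspaces, so
`O⁺` is a group; it contains the reflections in negative vectors and the Eichler transvections.

The group generated by `R` and the stabilizer of `ε` acts transitively on the `(-2)`-vectors having
even product with the whole lattice. For such a vector `v` with first coordinate `v₀ ≠ 0`,
transvections fixing `ε` reduce the coordinates on the other hyperbolic planes and on `ζ` modulo
`v₀`, and `R` exchanges `ζ` and `ε` up to sign, so the coordinate on `ε` can be reduced as well.
Every nonzero coordinate on `U³` other than `v₀` is then smaller than `v₀` and can take its place.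
This descent ends in `ℤe₁ ⊕ ℤζ ⊕ ℤε`, where `v` is visibly equivalent to `ε`.

Given `g ∈ O⁺(M)`, some `h` in the generated group therefore satisfies `h ε = g ε`, and `h⁻¹ g` lies
in the stabilizer of `ε`.
-/

section MaximalPositiveDefinite

variable {ι : Type*} [Fintype ι] {k l : ℕ} {S : Matrix ι ι ℝ}

/-- The rows of `W` form a basis of a maximal positive definite subspace for the form with Gram
matrix `S`. Frames are stored as matrices of rows, so `V * S * Wᵀ` is the matrix of mutual products
of two frames and a linear map `g` moves the frame `W` to `W * gᵀ`. -/
def IsMaxPosFrame (S : Matrix ι ι ℝ) (W : Matrix (Fin k) ι ℝ) : Prop :=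
  (W * S * Wᵀ).PosDef ∧ ∀ W' : Matrix (Fin (k + 1)) ι ℝ, ¬ (W' * S * W'ᵀ).PosDef

theorem dotProduct_mul_mul_transpose_mulVec {κ ν : Type*} [Fintype κ] [Fintype ν]
    (V : Matrix κ ι ℝ) (W : Matrix ν ι ℝ) (c : κ → ℝ) (d : ν → ℝ) :
    c ⬝ᵥ (V * S * Wᵀ) *ᵥ d = (c ᵥ* V) ⬝ᵥ S *ᵥ (d ᵥ* W) := by
  rw [← mulVec_mulVec, ← mulVec_mulVec, dotProduct_mulVec, mulVec_transpose]

theorem mul_mul_transpose_isSymm {κ : Type*} (hS : S.IsSymm) (W : Matrix κ ι ℝ) :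
    (W * S * Wᵀ).IsSymm := by
  rw [IsSymm, transpose_mul, transpose_mul, transpose_transpose, hS.eq, Matrix.mul_assoc]

theorem dotProduct_mulVec_comm {R : Type*} [CommRing R] {M : Matrix ι ι R} (hM : M.IsSymm)
    (x y : ι → R) : x ⬝ᵥ M *ᵥ y = y ⬝ᵥ M *ᵥ x := by
  simpa only [hM.eq] using dotProduct_transpose_mulVec M x y

theorem posDef_vecCons_of_orthogonal (hS : S.IsSymm) {W : Matrix (Fin k) ι ℝ}
    (hW : (W * S * Wᵀ).PosDef) {x : ι → ℝ} (hWx : W *ᵥ S *ᵥ x = 0) (hx : 0 < x ⬝ᵥ S *ᵥ x) :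
    (of (vecCons x (of.symm W)) * S * (of (vecCons x (of.symm W)))ᵀ).PosDef := by
  refine .of_dotProduct_mulVec_pos
    (isHermitian_iff_isSymm.mpr (mul_mul_transpose_isSymm hS _)) fun c hc => ?_
  obtain ⟨a, d, rfl⟩ : ∃ a d, c = vecCons a d := ⟨_, _, (cons_head_tail c).symm⟩
  have cross_eq_zero : (d ᵥ* W) ⬝ᵥ S *ᵥ x = 0 := by
    rw [← dotProduct_mulVec, hWx, dotProduct_zero]
  have expand : star (vecCons a d) ⬝ᵥ
      (of (vecCons x (of.symm W)) * S * (of (vecCons x (of.symm W)))ᵀ) *ᵥ vecCons a d =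
      a ^ 2 * (x ⬝ᵥ S *ᵥ x) + d ⬝ᵥ (W * S * Wᵀ) *ᵥ d := by
    rw [star_trivial, dotProduct_mul_mul_transpose_mulVec, dotProduct_mul_mul_transpose_mulVec,
      cons_vecMul_cons, Equiv.apply_symm_apply]
    simp only [mulVec_add, mulVec_smul, dotProduct_add, add_dotProduct, smul_dotProduct,
      dotProduct_smul, smul_eq_mul, dotProduct_mulVec_comm hS x (d ᵥ* W), cross_eq_zero]
    ring
  rw [expand]
  have tail_nonneg := hW.posSemidef.dotProduct_mulVec_nonneg d
  rw [star_trivial] at tail_nonneg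
  by_cases ha : a = 0
  · have hd : d ≠ 0 := fun hd => hc (by simp [ha, hd])
    simpa [ha] using hW.dotProduct_mulVec_pos hd
  · positivity

namespace IsMaxPosFrame

theorem dotProduct_self_nonpos (hS : S.IsSymm) {W : Matrix (Fin k) ι ℝ} (hW : IsMaxPosFrame S W)
    {x : ι → ℝ} (hWx : W *ᵥ S *ᵥ x = 0) : x ⬝ᵥ S *ᵥ x ≤ 0 :=
  not_lt.mp fun hx => hW.2 _ (posDef_vecCons_of_orthogonal hS hW.1 hWx hx)

theorem det_ne_zero (hS : S.IsSymm) {V W : Matrix (Fin k) ι ℝ} (hV : IsMaxPosFrame S V)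
    (hW : (W * S * Wᵀ).PosDef) : (V * S * Wᵀ).det ≠ 0 := by
  intro hdet
  obtain ⟨c, hc, hc0⟩ := exists_mulVec_eq_zero_iff.mpr hdet
  have pos := hW.dotProduct_mulVec_pos hc
  rw [star_trivial, dotProduct_mul_mul_transpose_mulVec] at pos
  refine pos.not_ge (hV.dotProduct_self_nonpos hS ?_)
  rwa [← mulVec_transpose, mulVec_mulVec, mulVec_mulVec]

theorem neg_posSemidef_of_orthogonal (hS : S.IsSymm) {V : Matrix (Fin k) ι ℝ}
    (hV : IsMaxPosFrame S V) {N : Matrix (Fin l) ι ℝ} (hVN : V * S * Nᵀ = 0) :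
    (-(N * S * Nᵀ)).PosSemidef := by
  refine .of_dotProduct_mulVec_nonneg
    (isHermitian_iff_isSymm.mpr (mul_mul_transpose_isSymm hS N)).neg fun c => ?_
  rw [star_trivial, neg_mulVec, dotProduct_neg, dotProduct_mul_mul_transpose_mulVec, neg_nonneg]
  apply hV.dotProduct_self_nonpos hS
  rw [← mulVec_transpose, mulVec_mulVec, mulVec_mulVec, hVN, zero_mulVec]

end IsMaxPosFrame

theorem mul_pos_of_continuous_of_ne_zero {f : ℝ → ℝ} (hf : Continuous f)
    (hne : ∀ t ∈ Set.Icc (0 : ℝ) 1, f t ≠ 0) : 0 < f 0 * f 1 := by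
  by_contra! hle
  have zero_mem_uIcc : (0 : ℝ) ∈ Set.uIcc (f 0) (f 1) := by
    rw [Set.mem_uIcc]
    exact (mul_nonpos_iff.mp hle).symm.imp_right And.symm
  obtain ⟨t, ht, hft⟩ := intermediate_value_uIcc hf.continuousOn zero_mem_uIcc
  rw [Set.uIcc_of_le zero_le_one] at ht
  exact hne t ht hft

namespace IsMaxPosFrame

theorem det_mul_det_pos_of_orthogonal (hS : S.IsSymm) {U V N : Matrix (Fin k) ι ℝ}
    (hU : IsMaxPosFrame S U) (hV : IsMaxPosFrame S V) {A : Matrix (Fin k) (Fin k) ℝ}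
    (hVN : V * S * Nᵀ = 0) (hW : ((A * V + N) * S * (A * V + N)ᵀ).PosDef) :
    0 < (U * S * (A * V)ᵀ).det * (U * S * (A * V + N)ᵀ).det := by
  have hNV : N * S * Vᵀ = 0 := by
    simpa [hS.eq, Matrix.mul_assoc] using congrArg transpose hVN
  have gram_path (t : ℝ) : (A * V + t • N) * S * (A * V + t • N)ᵀ =
      (A * V + N) * S * (A * V + N)ᵀ + (1 - t ^ 2) • -(N * S * Nᵀ) := by
    have hAVN : A * V * S * Nᵀ = 0 := by
      rw [Matrix.mul_assoc, Matrix.mul_assoc, ← Matrix.mul_assoc V, hVN, Matrix.mul_zero]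
    have hNAV : N * S * (A * V)ᵀ = 0 := by
      rw [transpose_mul, ← Matrix.mul_assoc, hNV, Matrix.zero_mul]
    simp only [transpose_add, transpose_smul, Matrix.add_mul, Matrix.mul_add, Matrix.smul_mul,
      Matrix.mul_smul, hAVN, hNAV]
    module
  have path_posDef (t : ℝ) (ht : t ∈ Set.Icc (0 : ℝ) 1) :
      ((A * V + t • N) * S * (A * V + t • N)ᵀ).PosDef := by
    rw [gram_path]
    have ht_sq : 0 ≤ 1 - t ^ 2 := by nlinarith [ht.1, ht.2]
    exact hW.add_posSemidef ((hV.neg_posSemidef_of_orthogonal hS hVN).smul ht_sq)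
  have path_continuous : Continuous fun t : ℝ => (U * S * (A * V + t • N)ᵀ).det := by fun_prop
  simpa using mul_pos_of_continuous_of_ne_zero path_continuous
    fun t ht => hU.det_ne_zero hS (path_posDef t ht)

/-- Writing `W = A * V + N` with `N` orthogonal to `V`, the frame `A * V + t • N` stays positive
definite as `t` goes from `1` to `0`, which reduces the claim to `W = A * V`. -/
theorem det_mul_det_mul_det_pos (hS : S.IsSymm) {U V W : Matrix (Fin k) ι ℝ}
    (hU : IsMaxPosFrame S U) (hV : IsMaxPosFrame S V) (hW : (W * S * Wᵀ).PosDef) :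
    0 < (U * S * Vᵀ).det * (V * S * Wᵀ).det * (U * S * Wᵀ).det := by
  set G := V * S * Vᵀ with hG
  have hG_unit : IsUnit G.det := hV.1.det_pos.ne'.isUnit
  set A := W * S * Vᵀ * G⁻¹
  set N := W - A * V with hN
  have hW_eq : W = A * V + N := by rw [hN, add_sub_cancel]
  have hAG : A * G = W * S * Vᵀ := nonsing_inv_mul_cancel_right _ _ hG_unit
  have hNV : N * S * Vᵀ = 0 := by
    rw [hN, Matrix.sub_mul, Matrix.sub_mul, Matrix.mul_assoc A, Matrix.mul_assoc A, ← hG, hAG,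
      sub_self]
  have hVN : V * S * Nᵀ = 0 := by
    simpa [hS.eq, Matrix.mul_assoc] using congrArg transpose hNV
  have det_VW : (V * S * Wᵀ).det = A.det * G.det := by
    rw [← det_mul, hAG, ← det_transpose]
    simp [hS.eq, Matrix.mul_assoc]
  have det_UAV : (U * S * (A * V)ᵀ).det = (U * S * Vᵀ).det * A.det := by
    rw [transpose_mul, ← Matrix.mul_assoc, det_mul, det_transpose]
  have key := det_mul_det_pos_of_orthogonal hS hU hV hVN (hW_eq ▸ hW)
  rw [← hW_eq, det_UAV] at key
  calc 0 < (U * S * Vᵀ).det * A.det * (U * S * Wᵀ).det * G.det := mul_pos key hV.1.det_pos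
    _ = (U * S * Vᵀ).det * (V * S * Wᵀ).det * (U * S * Wᵀ).det := by rw [det_VW]; ring

end IsMaxPosFrame

end MaximalPositiveDefinite

section OrientationPreserving

variable {ι : Type*} [Fintype ι] {M g h : Matrix ι ι ℤ} {k : ℕ}

/-- The extension of an integral matrix to `L ⊗ ℝ`, in the form in which it occurs in `bilinR` and
`OrientPres`. -/
abbrev realExt (M : Matrix ι ι ℤ) : Matrix ι ι ℝ := M.map (Int.cast : ℤ → ℝ)

theorem realExt_mul (g h : Matrix ι ι ℤ) : realExt (g * h) = realExt g * realExt h :=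
  Matrix.map_mul (f := Int.castRingHom ℝ)

theorem realExt_mulVec_apply (M : Matrix ι ι ℤ) (x : ι → ℤ) (i : ι) :
    ((M *ᵥ x) i : ℝ) = (realExt M *ᵥ fun j => (x j : ℝ)) i :=
  RingHom.map_mulVec (Int.castRingHom ℝ) M x i

theorem realExt_dotProduct_mulVec (M : Matrix ι ι ℤ) (x y : ι → ℤ) :
    (fun i => (x i : ℝ)) ⬝ᵥ realExt M *ᵥ (fun i => (y i : ℝ)) = (x ⬝ᵥ M *ᵥ y : ℤ) := by
  simp [dotProduct, realExt_mulVec_apply]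

theorem of_bilinR (M : Matrix ι ι ℤ) (v w : Fin k → ι → ℝ) :
    (of fun i j => bilinR M (v i) (w j)) = of v * realExt M * (of w)ᵀ := by
  rw [Matrix.mul_assoc]
  rfl

theorem of_mulVec {κ : Type*} (T : Matrix ι ι ℝ) (w : κ → ι → ℝ) :
    (of fun j => T *ᵥ w j) = of w * Tᵀ := by
  ext i j
  exact dotProduct_comm _ _

theorem isMaxPosTuple_iff {w : Fin k → ι → ℝ} :
    IsMaxPosTuple M w ↔ IsMaxPosFrame (realExt M) (of w) := by
  simp only [IsMaxPosTuple, IsMaxPosFrame, of_bilinR]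
  rfl

theorem orientPres_iff : OrientPres M g ↔ ∀ (k : ℕ) (W : Matrix (Fin k) ι ℝ),
    IsMaxPosFrame (realExt M) W → 0 < (W * realExt M * (W * (realExt g)ᵀ)ᵀ).det := by
  refine forall₂_congr fun k w => imp_congr isMaxPosTuple_iff ?_
  rw [of_bilinR, of_mulVec]
  rfl

theorem IsMaxPosFrame.mul_transpose {S T : Matrix ι ι ℝ} (hT : Tᵀ * S * T = S)
    {W : Matrix (Fin k) ι ℝ} (hW : IsMaxPosFrame S W) : IsMaxPosFrame S (W * Tᵀ) := by
  refine ⟨?_, hW.2⟩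
  have gram_eq : W * Tᵀ * S * (W * Tᵀ)ᵀ = W * (Tᵀ * S * T) * Wᵀ := by
    simp only [transpose_mul, transpose_transpose, Matrix.mul_assoc]
  rw [gram_eq, hT]
  exact hW.1

namespace IsIsometry

theorem realExt (hg : IsIsometry M g) :
    (realExt g)ᵀ * realExt M * realExt g = realExt M := by
  rw [← transpose_map, ← realExt_mul, ← realExt_mul, hg]

theorem mul_s14 (hg : IsIsometry M g) (hh : IsIsometry M h) : IsIsometry M (g * h) :=
  calc (g * h)ᵀ * M * (g * h) = hᵀ * (gᵀ * M * g) * h := by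
        simp only [transpose_mul, Matrix.mul_assoc]
    _ = M := by rw [hg, hh]

theorem dotProduct_mulVec (hg : IsIsometry M g) (x y : ι → ℤ) :
    (g *ᵥ x) ⬝ᵥ M *ᵥ g *ᵥ y = x ⬝ᵥ M *ᵥ y := by
  conv_rhs => rw [← show gᵀ * M * g = M from hg]
  rw [← mulVec_mulVec, ← mulVec_mulVec, dotProduct_transpose_mulVec, dotProduct_comm]

end IsIsometry

theorem isometry_of_dotProduct_mulVec {R : Type*} [CommRing R] {M g : Matrix ι ι R}
    (h : ∀ x y, (g *ᵥ x) ⬝ᵥ M *ᵥ g *ᵥ y = x ⬝ᵥ M *ᵥ y) : gᵀ * M * g = M := by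
  classical
  refine ext_iff_mulVec.mpr fun y => dotProduct_eq _ _ fun x => ?_
  rw [dotProduct_comm, dotProduct_comm _ x, ← h x y, ← mulVec_mulVec, ← mulVec_mulVec,
    dotProduct_transpose_mulVec, dotProduct_comm]

namespace IsIsometry

variable [DecidableEq ι]

theorem one (M : Matrix ι ι ℤ) : IsIsometry M 1 := by simp [IsIsometry]

theorem inv {u : (Matrix ι ι ℤ)ˣ} (hu : IsIsometry M u) : IsIsometry M ↑u⁻¹ :=
  calc (↑u⁻¹)ᵀ * M * ↑u⁻¹ = (↑u⁻¹)ᵀ * ((↑u)ᵀ * M * ↑u) * ↑u⁻¹ := by rw [hu]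
    _ = (↑u * ↑u⁻¹)ᵀ * M * (↑u * ↑u⁻¹) := by simp only [transpose_mul, Matrix.mul_assoc]
    _ = M := by simp

theorem isUnit (hM : M.det ≠ 0) (hg : IsIsometry M g) : IsUnit g := by
  rw [isUnit_iff_isUnit_det]
  have det_sq : M.det * (g.det * g.det) = M.det * 1 := by
    conv_rhs => rw [← show gᵀ * M * g = M from hg]
    rw [det_mul, det_mul, det_transpose]
    ring
  exact .of_mul_eq_one _ (mul_left_cancel₀ hM det_sq)

end IsIsometry

namespace OrientPres

theorem mul_s14 (hM : M.IsSymm) (hg_isom : IsIsometry M g) (hh_isom : IsIsometry M h)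
    (hg : OrientPres M g) (hh : OrientPres M h) : OrientPres M (g * h) := by
  rw [orientPres_iff] at hg hh ⊢
  intro k W hW
  have hhW := hW.mul_transpose hh_isom.realExt
  have hghW := hhW.mul_transpose hg_isom.realExt
  have frame_eq : W * (realExt (g * h))ᵀ = W * (realExt h)ᵀ * (realExt g)ᵀ := by
    rw [realExt_mul, transpose_mul, Matrix.mul_assoc]
  rw [frame_eq]
  have cocycle := hW.det_mul_det_mul_det_pos (hM.map _) hhW hghW.1
  exact (pos_iff_pos_of_mul_pos cocycle).mp (mul_pos (hh k W hW) (hg k _ hhW))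

variable [DecidableEq ι]

theorem one (M : Matrix ι ι ℤ) : OrientPres M 1 := by
  rw [orientPres_iff]
  intro k W hW
  simpa [realExt] using hW.1.det_pos

theorem inv (hM : M.IsSymm) {u : (Matrix ι ι ℤ)ˣ} (hu_isom : IsIsometry M u)
    (hu : OrientPres M u) : OrientPres M ↑u⁻¹ := by
  rw [orientPres_iff] at hu ⊢
  intro k W hW
  have frame_eq : W * (realExt (↑u⁻¹ : Matrix ι ι ℤ))ᵀ * (realExt (u : Matrix ι ι ℤ))ᵀ = W := by
    rw [Matrix.mul_assoc, ← transpose_mul, ← realExt_mul, Units.mul_inv]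
    simp [realExt]
  have pos := hu k _ (hW.mul_transpose hu_isom.inv.realExt)
  rw [frame_eq, ← det_transpose] at pos
  simpa [(hM.map _).eq, Matrix.mul_assoc] using pos

end OrientPres

/-- The group `O⁺(L)` of the lattice with symmetric Gram matrix `M`, inside `GL(L)`. -/
def orthogonalPlus [DecidableEq ι] (M : Matrix ι ι ℤ) (hM : M.IsSymm) :
    Subgroup (Matrix ι ι ℤ)ˣ where
  carrier := {g | IsIsometry M (g : Matrix ι ι ℤ) ∧ OrientPres M (g : Matrix ι ι ℤ)}
  one_mem' := ⟨.one M, .one M⟩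
  mul_mem' hg hh := ⟨hg.1.mul_s14 hh.1, hg.2.mul_s14 hM hg.1 hh.1 hh.2⟩
  inv_mem' hg := ⟨hg.1.inv, hg.2.inv hM hg.1⟩

end OrientationPreserving

section Reflection

variable {ι : Type*} [Fintype ι] {M g : Matrix ι ι ℤ} {r : ι → ℤ}

/-- `g` is the reflection `x ↦ x - 2 (x, r) / (r, r) r` in the vector `r` of the lattice with Gram
matrix `M`. The denominator is cleared, so that `r` may have any nonzero square. -/
def IsReflection (M : Matrix ι ι ℤ) (r : ι → ℤ) (g : Matrix ι ι ℤ) : Prop :=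
  ∀ x : ι → ℤ, (r ⬝ᵥ M *ᵥ r) • g *ᵥ x = (r ⬝ᵥ M *ᵥ r) • x - (2 * (x ⬝ᵥ M *ᵥ r)) • r

namespace IsReflection

theorem smul_eq [DecidableEq ι] (hg : IsReflection M r g) :
    (r ⬝ᵥ M *ᵥ r) • g = (r ⬝ᵥ M *ᵥ r) • 1 - (2 : ℤ) • vecMulVec r (M *ᵥ r) := by
  refine ext_iff_mulVec.mpr fun x => ?_
  rw [smul_mulVec, hg x, sub_mulVec, smul_mulVec, one_mulVec, smul_mulVec, vecMulVec_mulVec,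
    dotProduct_comm (M *ᵥ r), mul_smul, op_smul_eq_smul]

theorem isIsometry (hM : M.IsSymm) (hr : r ⬝ᵥ M *ᵥ r ≠ 0) (hg : IsReflection M r g) :
    IsIsometry M g := by
  refine isometry_of_dotProduct_mulVec fun x y => ?_
  apply mul_left_cancel₀ (pow_ne_zero 2 hr)
  calc (r ⬝ᵥ M *ᵥ r) ^ 2 * ((g *ᵥ x) ⬝ᵥ M *ᵥ g *ᵥ y)
      = ((r ⬝ᵥ M *ᵥ r) • g *ᵥ x) ⬝ᵥ M *ᵥ ((r ⬝ᵥ M *ᵥ r) • g *ᵥ y) := by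
        simp only [mulVec_smul, smul_dotProduct, dotProduct_smul, smul_eq_mul]
        ring
    _ = (r ⬝ᵥ M *ᵥ r) ^ 2 * (x ⬝ᵥ M *ᵥ y) := by
        rw [hg x, hg y]
        simp only [mulVec_sub, mulVec_smul, sub_dotProduct, dotProduct_sub, smul_dotProduct,
          dotProduct_smul, smul_eq_mul, dotProduct_mulVec_comm hM r y]
        ring

/-- On a positive definite frame `W` the matrix of products with the reflected frame is the Gram
matrix of `W` plus a nonnegative multiple of a rank one square. -/
theorem orientPres (hr : r ⬝ᵥ M *ᵥ r < 0) (hg : IsReflection M r g) :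
    OrientPres M g := by
  classical
  rw [orientPres_iff]
  intro k W hW
  set S := realExt M
  set ρ : ι → ℝ := fun i => r i
  set q : ℝ := ((r ⬝ᵥ M *ᵥ r : ℤ) : ℝ)
  have hq : q < 0 := Int.cast_lt_zero.mpr hr
  have hSρ (j : ι) : ((M *ᵥ r) j : ℝ) = (S *ᵥ ρ) j := realExt_mulVec_apply M r j
  have real_smul_eq : q • realExt g = q • 1 - (2 : ℝ) • vecMulVec ρ (S *ᵥ ρ) := by
    ext i j
    have entry := congrArg (Int.cast : ℤ → ℝ) (congrFun₂ hg.smul_eq i j)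
    simp only [Matrix.smul_apply, Matrix.sub_apply, vecMulVec_apply, one_apply, smul_eq_mul,
      map_apply, ← hSρ] at entry ⊢
    push_cast at entry
    exact entry
  have real_eq : realExt g = 1 + (-2 / q) • vecMulVec ρ (S *ᵥ ρ) := by
    apply smul_right_injective _ hq.ne
    simp only [real_smul_eq, smul_add, smul_smul, mul_div_cancel₀ _ hq.ne, neg_smul]
    rw [sub_eq_add_neg]
  have gram_eq : W * S * (W * (realExt g)ᵀ)ᵀ =
      W * S * Wᵀ + (-2 / q) • vecMulVec (W *ᵥ S *ᵥ ρ) (star (W *ᵥ S *ᵥ ρ)) := by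
    rw [real_eq, transpose_mul, transpose_transpose, Matrix.add_mul, Matrix.one_mul,
      Matrix.mul_add, Matrix.smul_mul, Matrix.mul_smul, vecMulVec_mul, mul_vecMulVec,
      ← mulVec_mulVec, vecMul_transpose, star_trivial]
  rw [gram_eq]
  have coeff_nonneg : 0 ≤ -2 / q := div_nonneg_of_nonpos (by norm_num) hq.le
  exact (hW.1.add_posSemidef ((posSemidef_vecMulVec_self_star _).smul coeff_nonneg)).det_pos

end IsReflection

variable [DecidableEq ι]

/-- The reflection `x ↦ x + (x, r) r` in a vector `r` of square `-2`. -/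
def rootReflection (M : Matrix ι ι ℤ) (r : ι → ℤ) : Matrix ι ι ℤ :=
  1 + vecMulVec r (M *ᵥ r)

theorem rootReflection_mulVec (M : Matrix ι ι ℤ) (r x : ι → ℤ) :
    rootReflection M r *ᵥ x = x + (x ⬝ᵥ M *ᵥ r) • r := by
  simp [rootReflection, add_mulVec, vecMulVec_mulVec, dotProduct_comm]

theorem rootReflection_isReflection (hr : r ⬝ᵥ M *ᵥ r = -2) :
    IsReflection M r (rootReflection M r) := by
  intro x
  rw [hr, rootReflection_mulVec]
  module

end Reflection

section EichlerTransvection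

variable {ι R : Type*} [Fintype ι] [CommRing R]

/-- The data of an Eichler transvection: an isotropic vector `e`, a vector `a` orthogonal to `e`,
and half the square of `a`, carried separately so that `2` need not be invertible in `R`. -/
structure IsEichlerData (M : Matrix ι ι R) (e a : ι → R) (q : R) : Prop where
  isotropic : e ⬝ᵥ M *ᵥ e = 0
  orthogonal : e ⬝ᵥ M *ᵥ a = 0
  half_sq : a ⬝ᵥ M *ᵥ a = 2 * q

namespace IsEichlerData

variable {M : Matrix ι ι R} {e a : ι → R} {q : R}

theorem smul (h : IsEichlerData M e a q) (t : R) : IsEichlerData M e (t • a) (t ^ 2 * q) where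
  isotropic := h.isotropic
  orthogonal := by rw [mulVec_smul, dotProduct_smul, h.orthogonal, smul_zero]
  half_sq := by
    simp only [mulVec_smul, smul_dotProduct, dotProduct_smul, smul_eq_mul, h.half_sq]
    ring

theorem intCast {M : Matrix ι ι ℤ} {e a : ι → ℤ} {q : ℤ} (h : IsEichlerData M e a q) :
    IsEichlerData (realExt M) (fun i => (e i : ℝ)) (fun i => (a i : ℝ)) q where
  isotropic := by rw [realExt_dotProduct_mulVec, h.isotropic, Int.cast_zero]
  orthogonal := by rw [realExt_dotProduct_mulVec, h.orthogonal, Int.cast_zero]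
  half_sq := by rw [realExt_dotProduct_mulVec, h.half_sq, Int.cast_mul, Int.cast_ofNat]

end IsEichlerData

variable [DecidableEq ι]

/-- The Eichler transvection `x ↦ x + (e, x) a - ((a, x) + q (e, x)) e` of the lattice with Gram
matrix `M`, an isometry under `IsEichlerData M e a q`. -/
def eichler (M : Matrix ι ι R) (e a : ι → R) (q : R) : Matrix ι ι R :=
  1 + vecMulVec a (M *ᵥ e) - vecMulVec e (M *ᵥ a + q • M *ᵥ e)

theorem eichler_mulVec {M : Matrix ι ι R} (hM : M.IsSymm) (e a x : ι → R) (q : R) :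
    eichler M e a q *ᵥ x =
      x + (e ⬝ᵥ M *ᵥ x) • a - (a ⬝ᵥ M *ᵥ x + q * (e ⬝ᵥ M *ᵥ x)) • e := by
  have pairing (y : ι → R) : (M *ᵥ y) ⬝ᵥ x = y ⬝ᵥ M *ᵥ x := by
    rw [dotProduct_comm, dotProduct_mulVec_comm hM]
  simp only [eichler, sub_mulVec, add_mulVec, one_mulVec, vecMulVec_mulVec, op_smul_eq_smul,
    add_dotProduct, smul_dotProduct, pairing, smul_eq_mul]

theorem continuous_eichler_smul (M : Matrix ι ι ℝ) (e a : ι → ℝ) (q : ℝ) :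
    Continuous fun t : ℝ => eichler M e (t • a) (t ^ 2 * q) := by
  unfold eichler
  fun_prop

theorem IsEichlerData.isometry {M : Matrix ι ι R} (hM : M.IsSymm) {e a : ι → R} {q : R}
    (h : IsEichlerData M e a q) :
    (eichler M e a q)ᵀ * M * eichler M e a q = M := by
  refine isometry_of_dotProduct_mulVec fun x y => ?_
  simp only [eichler_mulVec hM, mulVec_add, mulVec_sub, mulVec_smul, add_dotProduct,
    sub_dotProduct, dotProduct_add, dotProduct_sub, smul_dotProduct, dotProduct_smul, smul_eq_mul,
    dotProduct_mulVec_comm hM x e, dotProduct_mulVec_comm hM x a, dotProduct_mulVec_comm hM a e,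
    h.isotropic, h.orthogonal, h.half_sq]
  ring

theorem realExt_eichler (M : Matrix ι ι ℤ) (e a : ι → ℤ) (q : ℤ) :
    realExt (eichler M e a q) =
      eichler (realExt M) (fun i => (e i : ℝ)) (fun i => (a i : ℝ)) q := by
  ext i j
  simp [eichler, vecMulVec_apply, one_apply, realExt_mulVec_apply]

/-- Scaling `a` by `t` from `1` to `0` deforms the transvection to the identity through real
isometries. -/
theorem IsEichlerData.orientPres {M : Matrix ι ι ℤ} (hM : M.IsSymm) {e a : ι → ℤ} {q : ℤ}
    (h : IsEichlerData M e a q) :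
    OrientPres M (eichler M e a q) := by
  rw [orientPres_iff, realExt_eichler]
  intro k W hW
  set T : ℝ → Matrix ι ι ℝ := fun t =>
    eichler (realExt M) (fun i => (e i : ℝ)) (t • fun i => (a i : ℝ)) (t ^ 2 * q) with hT
  have hT_continuous : Continuous T := continuous_eichler_smul _ _ _ _
  have path_continuous : Continuous fun t =>
      (W * realExt M * (W * (T t)ᵀ)ᵀ).det := by fun_prop
  have key := mul_pos_of_continuous_of_ne_zero path_continuous fun t _ =>
    hW.det_ne_zero (hM.map _) (hW.mul_transpose ((h.intCast.smul t).isometry (hM.map _))).1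
  have hT_zero : T 0 = 1 := by simp [hT, eichler]
  have hT_one : T 1 = eichler (realExt M) (fun i => (e i : ℝ)) (fun i => (a i : ℝ)) q := by
    simp [hT]
  rw [hT_zero, hT_one, transpose_one, Matrix.mul_one] at key
  exact (pos_iff_pos_of_mul_pos key).mp hW.1.det_pos

end EichlerTransvection

section EvenRoot

variable {ι : Type*} [Fintype ι] {M : Matrix ι ι ℤ}

/-- `v` is a vector of square `-2` whose products with all lattice vectors are even, like the
generator `ε` of an orthogonal summand `⟨-2⟩`. -/
def IsEvenRoot (M : Matrix ι ι ℤ) (v : ι → ℤ) : Prop :=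
  v ⬝ᵥ M *ᵥ v = -2 ∧ ∀ x, 2 ∣ x ⬝ᵥ M *ᵥ v

theorem IsEvenRoot.units_smul [DecidableEq ι] {u : (Matrix ι ι ℤ)ˣ} (hu : IsIsometry M u)
    {v : ι → ℤ} (hv : IsEvenRoot M v) : IsEvenRoot M (u • v) := by
  refine ⟨(hu.dotProduct_mulVec v v).trans hv.1, fun x => ?_⟩
  rw [← smul_inv_smul u x]
  exact (hu.dotProduct_mulVec (u⁻¹ • x) v).symm ▸ hv.2 (u⁻¹ • x)

end EvenRoot

theorem exists_two_mul_abs_add_mul_le (x : ℤ) {m : ℤ} (hm : m ≠ 0) :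
    ∃ k, 2 * |x + m * k| ≤ |m| := by
  obtain ⟨k, hk⟩ : m ∣ x.bmod m.natAbs - x :=
    Int.dvd_natAbs_self.trans Int.dvd_bmod_sub_self
  refine ⟨k, ?_⟩
  rw [← hk, add_sub_cancel]
  have lower := Int.le_bmod (x := x) (m := m.natAbs) (by omega)
  have upper := Int.bmod_le (x := x) (m := m.natAbs) (by omega)
  rw [Int.abs_eq_natAbs, Int.abs_eq_natAbs]
  omega

theorem exists_sub_mul_ne_zero_abs_le (x : ℤ) {m : ℤ} (hm : m ≠ 0) :
    ∃ k, x - k * m ≠ 0 ∧ |x - k * m| ≤ |m| := by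
  by_cases hdvd : m ∣ x
  · obtain ⟨k, rfl⟩ := hdvd
    refine ⟨k - 1, ?_⟩
    have sub_eq : m * k - (k - 1) * m = m := by ring
    rw [sub_eq]
    exact ⟨hm, le_rfl⟩
  · refine ⟨x / m, ?_⟩
    rw [mul_comm, ← Int.emod_def, abs_of_nonneg (Int.emod_nonneg x hm)]
    exact ⟨fun h => hdvd (Int.dvd_of_emod_eq_zero h), (Int.emod_lt_abs x hm).le⟩

section Lattice

theorem G8_isSymm : G8.IsSymm := by decide

theorem G8_det_ne_zero : G8.det ≠ 0 := by
  have G8_mul_self : G8 * G8 = diagonal ![1, 1, 1, 1, 1, 1, 4, 4] := by decide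
  refine left_ne_zero_of_mul (b := G8.det) ?_
  rw [← det_mul, G8_mul_self, det_diagonal]
  decide

theorem G8_mulVec (x : Fin 8 → ℤ) :
    G8 *ᵥ x = ![x 1, x 0, x 3, x 2, x 5, x 4, -2 * x 6, -2 * x 7] := by
  ext i
  fin_cases i <;> simp [G8, mulVec, dotProduct, Fin.sum_univ_succ]

theorem RM_mulVec (x : Fin 8 → ℤ) :
    RM *ᵥ x = ![x 0, x 1, x 2, x 3, x 4, x 5, -x 7, -x 6] := by
  ext i
  fin_cases i <;> simp [RM, mulVec, dotProduct, Fin.sum_univ_succ]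

theorem dotProduct_G8_mulVec (x y : Fin 8 → ℤ) :
    x ⬝ᵥ G8 *ᵥ y = x 0 * y 1 + x 1 * y 0 + x 2 * y 3 + x 3 * y 2 + x 4 * y 5 + x 5 * y 4
      - 2 * x 6 * y 6 - 2 * x 7 * y 7 := by
  rw [G8_mulVec]
  simp only [dotProduct, Fin.sum_univ_eight, cons_val]
  ring

/-- Half the square of a vector of the even lattice `U³ ⊕ ⟨-2⟩ ⊕ ⟨-2⟩`. -/
def halfSq (x : Fin 8 → ℤ) : ℤ :=
  x 0 * x 1 + x 2 * x 3 + x 4 * x 5 - x 6 ^ 2 - x 7 ^ 2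

theorem dotProduct_G8_mulVec_self (x : Fin 8 → ℤ) : x ⬝ᵥ G8 *ᵥ x = 2 * halfSq x := by
  rw [dotProduct_G8_mulVec, halfSq]
  ring

theorem dotProduct_G8_mulVec_epsv (x : Fin 8 → ℤ) : x ⬝ᵥ G8 *ᵥ epsv = -2 * x 7 := by
  simp [dotProduct_G8_mulVec, epsv]

theorem epsv_isEvenRoot : IsEvenRoot G8 epsv := by
  refine ⟨by decide, fun x => ?_⟩
  rw [dotProduct_G8_mulVec_epsv]
  exact ⟨-x 7, by ring⟩

theorem IsEvenRoot.halfSq_eq {v : Fin 8 → ℤ} (hv : IsEvenRoot G8 v) : halfSq v = -1 := by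
  have h := hv.1
  rw [dotProduct_G8_mulVec_self] at h
  linarith

theorem IsEvenRoot.two_dvd_apply_zero {v : Fin 8 → ℤ} (hv : IsEvenRoot G8 v) : 2 ∣ v 0 := by
  simpa [G8_mulVec] using hv.2 (Pi.single 1 1)

theorem dotProduct_G8_mulVec_zpe (x : Fin 8 → ℤ) : x ⬝ᵥ G8 *ᵥ zpe = 2 * (-x 6 - x 7) := by
  simp only [dotProduct_G8_mulVec, zpe, cons_val]
  ring

theorem two_smul_RM_mulVec (x : Fin 8 → ℤ) :
    2 • (RM *ᵥ x) = 2 • x + (x ⬝ᵥ G8 *ᵥ zpe) • zpe := by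
  rw [dotProduct_G8_mulVec_zpe, RM_mulVec]
  ext i
  fin_cases i <;> simp [zpe] <;> ring

theorem RM_isReflection : IsReflection G8 zpe RM := by
  intro x
  have zpe_sq : zpe ⬝ᵥ G8 *ᵥ zpe = -4 := by decide
  rw [zpe_sq]
  have h := two_smul_RM_mulVec x
  linear_combination (-2 : ℤ) • h

theorem RM_isIsometry : IsIsometry G8 RM := RM_isReflection.isIsometry G8_isSymm (by decide)

theorem RM_orientPres : OrientPres G8 RM := RM_isReflection.orientPres (by decide)

end Lattice

section GeneratedSubgroup

/-- The subgroup of `GL(M)` generated by `R` and the stabilizer of `ε` in `O⁺(M)`. -/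
def generatedSubgroup : Subgroup (Matrix (Fin 8) (Fin 8) ℤ)ˣ :=
  Subgroup.closure
    ({g : (Matrix (Fin 8) (Fin 8) ℤ)ˣ | (g : Matrix (Fin 8) (Fin 8) ℤ) = RM} ∪
     {g : (Matrix (Fin 8) (Fin 8) ℤ)ˣ |
        (IsIsometry G8 (g : Matrix (Fin 8) (Fin 8) ℤ) ∧
          OrientPres G8 (g : Matrix (Fin 8) (Fin 8) ℤ)) ∧
        (g : Matrix (Fin 8) (Fin 8) ℤ) *ᵥ epsv = epsv})

theorem generatedSubgroup_le : generatedSubgroup ≤ orthogonalPlus G8 G8_isSymm := by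
  refine (Subgroup.closure_le _).mpr (Set.union_subset ?_ fun g hg => hg.1)
  rintro g (hg : (g : Matrix (Fin 8) (Fin 8) ℤ) = RM)
  change IsIsometry G8 (g : Matrix (Fin 8) (Fin 8) ℤ) ∧ OrientPres G8 _
  rw [hg]
  exact ⟨RM_isIsometry, RM_orientPres⟩

/-- The orbit of `v` under `generatedSubgroup`. That two vectors are in the same orbit is expressed
as equality of their orbits, so that such facts compose by transitivity of equality. -/
abbrev genOrbit (v : Fin 8 → ℤ) : Set (Fin 8 → ℤ) := MulAction.orbit generatedSubgroup v

theorem genOrbit_smul {g : (Matrix (Fin 8) (Fin 8) ℤ)ˣ} (hg : g ∈ generatedSubgroup)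
    (v : Fin 8 → ℤ) : genOrbit (g • v) = genOrbit v :=
  MulAction.orbit_smul (⟨g, hg⟩ : generatedSubgroup) v

theorem IsEvenRoot.of_genOrbit_eq {v w : Fin 8 → ℤ} (h : genOrbit w = genOrbit v)
    (hv : IsEvenRoot G8 v) : IsEvenRoot G8 w := by
  obtain ⟨⟨u, hu⟩, rfl⟩ := MulAction.orbit_eq_iff.mp h
  exact hv.units_smul (generatedSubgroup_le hu).1

theorem genOrbit_RM_mulVec (v : Fin 8 → ℤ) : genOrbit (RM *ᵥ v) = genOrbit v := by
  obtain ⟨u, hu⟩ := RM_isIsometry.isUnit G8_det_ne_zero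
  rw [← hu]
  exact genOrbit_smul (Subgroup.subset_closure (Or.inl hu)) v

theorem genOrbit_mulVec_of_mulVec_epsv_eq {g : Matrix (Fin 8) (Fin 8) ℤ} (hg : IsIsometry G8 g)
    (hg_orient : OrientPres G8 g) (hgε : g *ᵥ epsv = epsv) (v : Fin 8 → ℤ) :
    genOrbit (g *ᵥ v) = genOrbit v := by
  obtain ⟨u, rfl⟩ := hg.isUnit G8_det_ne_zero
  exact genOrbit_smul (Subgroup.subset_closure (Or.inr ⟨⟨hg, hg_orient⟩, hgε⟩)) v

theorem genOrbit_rootReflection {r : Fin 8 → ℤ} (hr : halfSq r = -1) (hr7 : r 7 = 0)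
    (v : Fin 8 → ℤ) : genOrbit (v + (v ⬝ᵥ G8 *ᵥ r) • r) = genOrbit v := by
  have hr_sq : r ⬝ᵥ G8 *ᵥ r = -2 := by rw [dotProduct_G8_mulVec_self, hr]; rfl
  have refl := rootReflection_isReflection hr_sq
  rw [← rootReflection_mulVec]
  refine genOrbit_mulVec_of_mulVec_epsv_eq (refl.isIsometry G8_isSymm (by omega))
    (refl.orientPres (by omega)) ?_ v
  rw [rootReflection_mulVec, dotProduct_mulVec_comm G8_isSymm, dotProduct_G8_mulVec_epsv, hr7]
  simp

theorem genOrbit_eichler_mulVec {e a : Fin 8 → ℤ} {q : ℤ} (h : IsEichlerData G8 e a q)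
    (he7 : e 7 = 0) (ha7 : a 7 = 0) (v : Fin 8 → ℤ) :
    genOrbit (eichler G8 e a q *ᵥ v) = genOrbit v := by
  refine genOrbit_mulVec_of_mulVec_epsv_eq (h.isometry G8_isSymm) (h.orientPres G8_isSymm) ?_ v
  rw [eichler_mulVec G8_isSymm, dotProduct_G8_mulVec_epsv, dotProduct_G8_mulVec_epsv, he7, ha7]
  simp

theorem genOrbit_eichler_single_zero {a : Fin 8 → ℤ} (ha1 : a 1 = 0) (ha7 : a 7 = 0)
    (v : Fin 8 → ℤ) :
    genOrbit (v + v 1 • a - (a ⬝ᵥ G8 *ᵥ v + halfSq a * v 1) • Pi.single 0 1) = genOrbit v := by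
  have pairing (x : Fin 8 → ℤ) : Pi.single 0 1 ⬝ᵥ G8 *ᵥ x = x 1 := by simp [G8_mulVec]
  have data : IsEichlerData G8 (Pi.single 0 1) a (halfSq a) :=
    ⟨pairing _, (pairing a).trans ha1, dotProduct_G8_mulVec_self a⟩
  simpa only [eichler_mulVec G8_isSymm, pairing] using genOrbit_eichler_mulVec data rfl ha7 v

theorem exists_apply_eq_add_apply_zero_mul {a : Fin 8 → ℤ} (ha0 : a 0 = 0) (ha7 : a 7 = 0)
    (v : Fin 8 → ℤ) : ∃ w, genOrbit w = genOrbit v ∧ ∀ i ≠ 1, w i = v i + v 0 * a i := by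
  have pairing (x : Fin 8 → ℤ) : Pi.single 1 1 ⬝ᵥ G8 *ᵥ x = x 0 := by simp [G8_mulVec]
  have data : IsEichlerData G8 (Pi.single 1 1) a (halfSq a) :=
    ⟨pairing _, (pairing a).trans ha0, dotProduct_G8_mulVec_self a⟩
  refine ⟨_, genOrbit_eichler_mulVec data rfl ha7 v, fun i hi => ?_⟩
  simp [eichler_mulVec G8_isSymm, pairing, hi]

end GeneratedSubgroup

section Descent

theorem exists_apply_zero_sub_mul (v : Fin 8 → ℤ) (k : ℤ) {j : Fin 8} (hj2 : 2 ≤ j)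
    (hj6 : j < 6) : ∃ w, genOrbit w = genOrbit v ∧ w 0 = v 0 - k * v j := by
  have shift (i : Fin 8) (hi2 : 2 ≤ i) (hi6 : i < 6) :
      ∃ w, genOrbit w = genOrbit v ∧ w 0 = v 0 - k * (G8 *ᵥ v) i := by
    have single_apply {l : Fin 8} (hl : l ≠ i) : (Pi.single i k : Fin 8 → ℤ) l = 0 := by
      simp [hl]
    have halfSq_single : halfSq (Pi.single i k) = 0 := by
      fin_cases i <;> first | contradiction | simp [halfSq]
    refine ⟨_, genOrbit_eichler_single_zero (a := Pi.single i k) (single_apply (by omega))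
      (single_apply (by omega)) v, ?_⟩
    simp [halfSq_single, single_apply (l := 0) (by omega)]
  obtain rfl | rfl | rfl | rfl : j = 2 ∨ j = 3 ∨ j = 4 ∨ j = 5 := by omega
  · simpa [G8_mulVec] using shift 3 (by decide) (by decide)
  · simpa [G8_mulVec] using shift 2 (by decide) (by decide)
  · simpa [G8_mulVec] using shift 5 (by decide) (by decide)
  · simpa [G8_mulVec] using shift 4 (by decide) (by decide)

theorem exists_apply_zero_eq_apply_one (v : Fin 8 → ℤ) :
    ∃ w, genOrbit w = genOrbit v ∧ w 0 = v 1 := by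
  refine ⟨_, genOrbit_rootReflection (r := ![1, -1, 0, 0, 0, 0, 0, 0]) (by decide) rfl v, ?_⟩
  simp [dotProduct_G8_mulVec]

theorem exists_apply_zero_ne_zero {v : Fin 8 → ℤ} {j : Fin 8} (hj1 : 1 ≤ j) (hj6 : j < 6)
    (hvj : v j ≠ 0) : ∃ w, genOrbit w = genOrbit v ∧ w 0 ≠ 0 ∧ |w 0| ≤ |v j| := by
  obtain rfl | hj2 : j = 1 ∨ 2 ≤ j := by omega
  · obtain ⟨w, hw, hw0⟩ := exists_apply_zero_eq_apply_one v
    exact ⟨w, hw, hw0 ▸ hvj, hw0 ▸ le_rfl⟩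
  · obtain ⟨k, hk_ne, hk_le⟩ := exists_sub_mul_ne_zero_abs_le (v 0) hvj
    obtain ⟨w, hw, hw0⟩ := exists_apply_zero_sub_mul v k hj2 hj6
    exact ⟨w, hw, hw0 ▸ hk_ne, hw0 ▸ hk_le⟩

theorem exists_two_mul_abs_le_of_ne_seven {v : Fin 8 → ℤ} (hv0 : v 0 ≠ 0) :
    ∃ w, genOrbit w = genOrbit v ∧ w 0 = v 0 ∧ w 7 = v 7 ∧
      ∀ i, 2 ≤ i → i ≠ 7 → 2 * |w i| ≤ |v 0| := by
  choose k hk using fun i => exists_two_mul_abs_add_mul_le (v i) hv0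
  obtain ⟨w, hw, hw_apply⟩ := exists_apply_eq_add_apply_zero_mul
    (a := fun i => if 2 ≤ i ∧ i ≠ 7 then k i else 0) (by simp) (by simp) v
  refine ⟨w, hw, by simp [hw_apply], by simp [hw_apply], fun i hi2 hi7 => ?_⟩
  rw [hw_apply i (by omega), if_pos ⟨hi2, hi7⟩]
  exact hk i

theorem exists_two_mul_abs_le {v : Fin 8 → ℤ} (hv0 : v 0 ≠ 0) :
    ∃ w, genOrbit w = genOrbit v ∧ w 0 = v 0 ∧ ∀ i, 2 ≤ i → 2 * |w i| ≤ |v 0| := by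
  obtain ⟨x, hx, hx0, -, hx_le⟩ := exists_two_mul_abs_le_of_ne_seven hv0
  have hRx0 : (RM *ᵥ x) 0 = v 0 := by simp [RM_mulVec, hx0]
  have hRx7 : (RM *ᵥ x) 7 = -x 6 := by simp [RM_mulVec]
  obtain ⟨w, hw, hw0, hw7, hw_le⟩ := exists_two_mul_abs_le_of_ne_seven (hRx0.trans_ne hv0)
  rw [hRx0] at hw0 hw_le
  refine ⟨w, hw.trans ((genOrbit_RM_mulVec x).trans hx), hw0, fun i hi2 => ?_⟩
  by_cases hi7 : i = 7
  · rw [hi7, hw7, hRx7, abs_neg]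
    exact hx_le 6 (by decide) (by decide)
  · exact hw_le i hi2 hi7

theorem abs_lt_of_mul_eq_sq_add_sq_sub_one {a b c d : ℤ} (ha : a ≠ 0) (ha_even : 2 ∣ a)
    (h : a * b = c ^ 2 + d ^ 2 - 1) (hc : 2 * |c| ≤ |a|) (hd : 2 * |d| ≤ |a|) : |b| < |a| := by
  have ha_two : 2 ≤ |a| := by
    rw [Int.abs_eq_natAbs]
    omega
  have hc_sq : 4 * c ^ 2 ≤ |a| ^ 2 := by
    nlinarith [abs_nonneg c, sq_abs c]
  have hd_sq : 4 * d ^ 2 ≤ |a| ^ 2 := by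
    nlinarith [abs_nonneg d, sq_abs d]
  have hab : |a| * |b| < |a| * |a| := by
    rw [← abs_mul, h, abs_lt]
    constructor <;> nlinarith [sq_nonneg c, sq_nonneg d]
  exact lt_of_mul_lt_mul_left hab (abs_nonneg a)

theorem IsEvenRoot.exists_abs_apply_zero_lt {v : Fin 8 → ℤ} (hv : IsEvenRoot G8 v)
    (hv0 : v 0 ≠ 0) :
    (∃ w, genOrbit w = genOrbit v ∧ w 0 ≠ 0 ∧ |w 0| < |v 0|) ∨
      ∃ w, genOrbit w = genOrbit v ∧ ∀ i, 1 ≤ i → i < 6 → w i = 0 := by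
  obtain ⟨x, hx, hx0, hx_le⟩ := exists_two_mul_abs_le hv0
  by_cases hvanish : ∀ i, 1 ≤ i → i < 6 → x i = 0
  · exact .inr ⟨x, hx, hvanish⟩
  suffices ∃ j, 1 ≤ j ∧ j < 6 ∧ x j ≠ 0 ∧ |x j| < |v 0| by
    obtain ⟨j, hj1, hj6, hxj, hlt⟩ := this
    obtain ⟨w, hw, hw0, hw_le⟩ := exists_apply_zero_ne_zero hj1 hj6 hxj
    exact .inl ⟨w, hw.trans hx, hw0, hw_le.trans_lt hlt⟩
  by_cases hU : ∃ j, 2 ≤ j ∧ j < 6 ∧ x j ≠ 0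
  · obtain ⟨j, hj2, hj6, hxj⟩ := hU
    have := hx_le j hj2
    have := abs_pos.mpr hxj
    exact ⟨j, by omega, hj6, hxj, by linarith⟩
  push Not at hU
  have hx1 : x 1 ≠ 0 := fun hx1 => hvanish fun i hi1 hi6 => by
    obtain rfl | hi2 : i = 1 ∨ 2 ≤ i := by omega
    exacts [hx1, hU i hi2 hi6]
  refine ⟨1, by decide, by decide, hx1, ?_⟩
  rw [← hx0]
  have hx_root := hv.of_genOrbit_eq hx
  have hx_sq := hx_root.halfSq_eq
  rw [halfSq, hU 2 (by decide) (by decide), hU 4 (by decide) (by decide)] at hx_sq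
  refine abs_lt_of_mul_eq_sq_add_sq_sub_one (hx0.trans_ne hv0) hx_root.two_dvd_apply_zero
    (c := x 6) (d := x 7) (by linarith) ?_ ?_
  · exact hx0 ▸ hx_le 6 (by decide)
  · exact hx0 ▸ hx_le 7 (by decide)

theorem IsEvenRoot.exists_vanishing_of_apply_zero_ne_zero {v : Fin 8 → ℤ} (hv : IsEvenRoot G8 v)
    (hv0 : v 0 ≠ 0) : ∃ w, genOrbit w = genOrbit v ∧ ∀ i, 1 ≤ i → i < 6 → w i = 0 := by
  induction hn : (v 0).natAbs using Nat.strong_induction_on generalizing v with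
  | _ n ih =>
    obtain ⟨x, hx, hx0, hlt⟩ | hdone := hv.exists_abs_apply_zero_lt hv0
    · rw [Int.abs_eq_natAbs, Int.abs_eq_natAbs, hn, Int.ofNat_lt] at hlt
      obtain ⟨w, hw, hw_vanish⟩ := ih _ hlt (hv.of_genOrbit_eq hx) hx0 rfl
      exact ⟨w, hw.trans hx, hw_vanish⟩
    · exact hdone

theorem IsEvenRoot.exists_vanishing {v : Fin 8 → ℤ} (hv : IsEvenRoot G8 v) :
    ∃ w, genOrbit w = genOrbit v ∧ ∀ i, 1 ≤ i → i < 6 → w i = 0 := by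
  by_cases hvanish : ∀ i, 1 ≤ i → i < 6 → v i = 0
  · exact ⟨v, rfl, hvanish⟩
  push Not at hvanish
  obtain ⟨j, hj1, hj6, hvj⟩ := hvanish
  obtain ⟨x, hx, hx0, -⟩ := exists_apply_zero_ne_zero hj1 hj6 hvj
  obtain ⟨w, hw, hw_vanish⟩ := (hv.of_genOrbit_eq hx).exists_vanishing_of_apply_zero_ne_zero hx0
  exact ⟨w, hw.trans hx, hw_vanish⟩

theorem genOrbit_neg_swap (a c d : ℤ) :
    genOrbit ![a, 0, 0, 0, 0, 0, -d, -c] = genOrbit ![a, 0, 0, 0, 0, 0, c, d] := by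
  simpa [RM_mulVec] using genOrbit_RM_mulVec ![a, 0, 0, 0, 0, 0, c, d]

theorem genOrbit_neg_apply_six (a c d : ℤ) :
    genOrbit ![a, 0, 0, 0, 0, 0, -c, d] = genOrbit ![a, 0, 0, 0, 0, 0, c, d] := by
  rw [← genOrbit_rootReflection (r := Pi.single 6 1) (by decide) rfl ![a, 0, 0, 0, 0, 0, c, d],
    dotProduct_G8_mulVec]
  congr 1
  ext i
  fin_cases i <;> simp
  ring

theorem genOrbit_add_two_mul_mul (a c d k : ℤ) :
    genOrbit ![a + 2 * k * c, 0, 0, 0, 0, 0, c, d] = genOrbit ![a, 0, 0, 0, 0, 0, c, d] := by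
  rw [← genOrbit_eichler_single_zero (a := Pi.single 6 k) rfl rfl ![a, 0, 0, 0, 0, 0, c, d],
    dotProduct_G8_mulVec]
  congr 1
  ext i
  fin_cases i <;> simp

theorem genOrbit_eq_genOrbit_epsv_of_sq_eq_one {a c : ℤ} (ha : 2 ∣ a) (hc : c ^ 2 = 1) :
    genOrbit ![a, 0, 0, 0, 0, 0, c, 0] = genOrbit epsv := by
  obtain ⟨m, rfl⟩ := ha
  have cancel : 2 * m + 2 * (-m * c) * c = 0 := by linear_combination -2 * m * hc
  rw [← genOrbit_add_two_mul_mul (2 * m) c 0 (-m * c), cancel]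
  have neg_one : genOrbit ![0, 0, 0, 0, 0, 0, -1, 0] = genOrbit epsv := genOrbit_neg_swap 0 0 1
  obtain rfl | rfl := sq_eq_one_iff.mp hc
  · rw [← neg_one, genOrbit_neg_apply_six]
  · exact neg_one

theorem IsEvenRoot.genOrbit_eq_genOrbit_epsv {v : Fin 8 → ℤ} (hv : IsEvenRoot G8 v) :
    genOrbit v = genOrbit epsv := by
  obtain ⟨w, hw, hw_vanish⟩ := hv.exists_vanishing
  have hw_root := hv.of_genOrbit_eq hw
  have hw_eq : w = ![w 0, 0, 0, 0, 0, 0, w 6, w 7] := by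
    ext i
    fin_cases i <;> first | rfl | exact hw_vanish _ (by decide) (by decide)
  have hw_sq := hw_root.halfSq_eq
  rw [halfSq, hw_vanish 1 (by decide) (by decide), hw_vanish 2 (by decide) (by decide),
    hw_vanish 4 (by decide) (by decide)] at hw_sq
  rw [← hw, hw_eq]
  by_cases hw7 : w 7 = 0
  · rw [hw7] at hw_sq ⊢
    exact genOrbit_eq_genOrbit_epsv_of_sq_eq_one hw_root.two_dvd_apply_zero (by linarith)
  · have hw6 : w 6 = 0 := by
      have := Int.one_le_abs hw7
      nlinarith [sq_abs (w 7)]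
    rw [← genOrbit_neg_swap, hw6, neg_zero]
    rw [hw6] at hw_sq
    exact genOrbit_eq_genOrbit_epsv_of_sq_eq_one hw_root.two_dvd_apply_zero (by linarith)

theorem generatedSubgroup_eq_orthogonalPlus :
    generatedSubgroup = orthogonalPlus G8 G8_isSymm := by
  refine generatedSubgroup_le.antisymm fun g hg => ?_
  have hgε : g • epsv ∈ genOrbit epsv :=
    MulAction.orbit_eq_iff.mp (epsv_isEvenRoot.units_smul hg.1).genOrbit_eq_genOrbit_epsv
  obtain ⟨⟨h, hh⟩, hhε : h • epsv = g • epsv⟩ := hgε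
  have fixes_epsv : (h⁻¹ * g) • epsv = epsv := by
    rw [mul_smul, ← hhε, inv_smul_smul]
  have inv_mul_mem : h⁻¹ * g ∈ generatedSubgroup :=
    Subgroup.subset_closure (Or.inr
      ⟨mul_mem (inv_mem (generatedSubgroup_le hh)) hg, fixes_epsv⟩)
  exact (Subgroup.mul_mem_cancel_left _ (inv_mem hh)).mp inv_mul_mem

end Descent

/-- On `M = U³ ⊕ ℤζ ⊕ ℤε`, the pairing `(x, ζ+ε)` is always even, the matrix `RM` realizes
the reflection `x ↦ x + ½ (x, ζ+ε)(ζ+ε)`, which is an isometry belonging to `O⁺(M)`, and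
`O⁺(M)` is generated by `R` together with the subgroup of elements of `O⁺(M)` fixing `ε`
(i.e. the extensions by the identity on `ℤε` of the elements of `O⁺(U³ ⊕ ℤζ)`).
The ambient group `(Matrix (Fin 8) (Fin 8) ℤ)ˣ` is `GL(M)`. -/
theorem stmt_14 :
    (∀ x : Fin 8 → ℤ, 2 ∣ x ⬝ᵥ (G8 *ᵥ zpe)) ∧
    (∀ x : Fin 8 → ℤ, 2 • (RM *ᵥ x) = 2 • x + (x ⬝ᵥ (G8 *ᵥ zpe)) • zpe) ∧
    (IsIsometry G8 RM ∧ OrientPres G8 RM) ∧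
    ((Subgroup.closure
        ({g : (Matrix (Fin 8) (Fin 8) ℤ)ˣ | (g : Matrix (Fin 8) (Fin 8) ℤ) = RM} ∪
         {g : (Matrix (Fin 8) (Fin 8) ℤ)ˣ |
            (IsIsometry G8 (g : Matrix (Fin 8) (Fin 8) ℤ) ∧
              OrientPres G8 (g : Matrix (Fin 8) (Fin 8) ℤ)) ∧
            (g : Matrix (Fin 8) (Fin 8) ℤ) *ᵥ epsv = epsv}) :
        Set ((Matrix (Fin 8) (Fin 8) ℤ)ˣ)) =
      {g : (Matrix (Fin 8) (Fin 8) ℤ)ˣ |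
        IsIsometry G8 (g : Matrix (Fin 8) (Fin 8) ℤ) ∧
          OrientPres G8 (g : Matrix (Fin 8) (Fin 8) ℤ)}) := by
  refine ⟨fun x => ?_, two_smul_RM_mulVec, ⟨RM_isIsometry, RM_orientPres⟩, ?_⟩
  · exact Dvd.intro _ (dotProduct_G8_mulVec_zpe x).symm
  · exact congrArg SetLike.coe generatedSubgroup_eq_orthogonalPlus
end
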